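/- arXiv:2102.04203 — 2 statements merged into one kernel-verified Lean document; each statement's English description precedes it below -/
import Mathlib

section
/- Let G be a (possibly infinite) graph and let T ⊆ V(G) be such that there is an s ∈ T with d(t) ≤ 1 for every t ∈ T−s, there is no X ⊆ V(G)∖T with d_G(X) an odd natural number, and there is a system 𝒫_s of pairwise edge-disjoint paths between s and T−s covering δ(s). Then there exists a system 𝒫 of pairwise edge-disjoint T-paths covering ⋃_{t∈T} δ(t). -/
/-!
Common definitions: multigraphs (parallel edges allowed, no loops), walks,
paths, cuts, waves and related notions used in the statements below.
-/

universe u v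

/-- A multigraph with vertex type `V` and edge type `E`: every edge is assigned
an unordered pair of *distinct* end-vertices (parallel edges allowed, no loops). -/
structure Multigraph (V : Type u) (E : Type v) : Type (max u v) where
  inc : E → Sym2 V
  not_isDiag : ∀ e, ¬ (inc e).IsDiag

namespace Multigraph

variable {V : Type u} {E : Type v}

/-- Walks in a multigraph, recorded together with the edges they traverse. -/
inductive Walk (G : Multigraph V E) : V → V → Type (max u v)
  | nil (v : V) : Walk G v v
  | cons {u v w : V} (e : E) (he : G.inc e = s(u, v)) (p : Walk G v w) : Walk G u w

namespace Walk

variable {G : Multigraph V E}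

/-- The list of vertices visited by a walk. -/
def support : ∀ {u w : V}, G.Walk u w → List V
  | _, _, .nil v => [v]
  | u, _, .cons _ _ p => u :: p.support

/-- The list of edges traversed by a walk. -/
def edges : ∀ {u w : V}, G.Walk u w → List E
  | _, _, .nil _ => []
  | _, _, .cons e _ p => e :: p.edges

end Walk

/-- `δ_G(v)`: the set of edges incident with the vertex `v`. -/
def inci (G : Multigraph V E) (v : V) : Set E := {e | v ∈ G.inc e}

/-- `δ_G(X)`: the set of edges with exactly one end-vertex in `X`. -/
def cut (G : Multigraph V E) (X : Set V) : Set E :=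
  {e | ∃ x y, G.inc e = s(x, y) ∧ x ∈ X ∧ y ∉ X}

/-- Connectedness of a multigraph. -/
def Connected (G : Multigraph V E) : Prop := ∀ u v : V, Nonempty (G.Walk u v)

/-- A `T`-path: a path connecting two distinct vertices of `T`
with no internal vertex in `T`. -/
structure TPath (G : Multigraph V E) (T : Set V) : Type (max u v) where
  first : V
  last : V
  walk : G.Walk first last
  first_mem : first ∈ T
  last_mem : last ∈ T
  ne : first ≠ last
  support_nodup : walk.support.Nodup
  internal : ∀ x ∈ walk.support, x ∈ T → x = first ∨ x = last

/-- A system of pairwise edge-disjoint `T`-paths. -/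
def TPathDisjoint (G : Multigraph V E) {T : Set V} (P : Set (G.TPath T)) : Prop :=
  ∀ p ∈ P, ∀ q ∈ P, p ≠ q → ∀ e, e ∈ p.walk.edges → e ∉ q.walk.edges

/-- An `st`-path: a path from `s` to `t` (no internal vertex is `s` or `t`,
which is automatic as the vertices of a path are distinct). -/
structure STPath (G : Multigraph V E) (s t : V) : Type (max u v) where
  walk : G.Walk s t
  support_nodup : walk.support.Nodup

/-- A system of pairwise edge-disjoint `st`-paths. -/
def STPathDisjoint (G : Multigraph V E) {s t : V} (P : Set (G.STPath s t)) : Prop :=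
  ∀ p ∈ P, ∀ q ∈ P, p ≠ q → ∀ e, e ∈ p.walk.edges → e ∉ q.walk.edges

/-- A nontrivial path starting at `s`. -/
structure SPath (G : Multigraph V E) (s : V) : Type (max u v) where
  last : V
  walk : G.Walk s last
  support_nodup : walk.support.Nodup
  edges_ne_nil : walk.edges ≠ []

/-- A system of pairwise edge-disjoint paths starting at `s`. -/
def SPathDisjoint (G : Multigraph V E) {s : V} (W : Set (G.SPath s)) : Prop :=
  ∀ p ∈ W, ∀ q ∈ W, p ≠ q → ∀ e, e ∈ p.walk.edges → e ∉ q.walk.edges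

/-- The set of last edges of a system of paths starting at `s`. -/
def lastEdges (G : Multigraph V E) {s : V} (W : Set (G.SPath s)) : Set E :=
  {e | ∃ p ∈ W, p.walk.edges.getLast? = some e}

/-- `C` is a cut separating `A` from `B`. -/
def SepCut (G : Multigraph V E) (A B : Set V) (C : Set E) : Prop :=
  ∃ X : Set V, A ⊆ X ∧ (∀ b ∈ B, b ∉ X) ∧ C = G.cut X

/-- `C` is a `⊆`-minimal cut separating `A` from `B`. -/
def IsMinSepCut (G : Multigraph V E) (A B : Set V) (C : Set E) : Prop :=
  G.SepCut A B C ∧ ∀ D : Set E, G.SepCut A B D → D ⊆ C → D = C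

/-- An `s`-`B`-wave: a system of pairwise edge-disjoint paths starting at `s`
whose set of last edges is a `⊆`-minimal cut separating `s` from `B`. -/
def IsWave (G : Multigraph V E) (s : V) (B : Set V) (W : Set (G.SPath s)) : Prop :=
  G.SPathDisjoint W ∧ G.IsMinSepCut {s} B (G.lastEdges W)

/-- An Erdős–Menger `st`-cut: an `st`-cut which is orthogonal to some system of
pairwise edge-disjoint `st`-paths, i.e. it consists of exactly one edge chosen
from each path of the system. -/
def IsEMCut (G : Multigraph V E) (s t : V) (C : Set E) : Prop :=
  (∃ X : Set V, s ∈ X ∧ t ∉ X ∧ C = G.cut X) ∧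
  ∃ P : Set (G.STPath s t), G.STPathDisjoint P ∧
    (∀ p ∈ P, ∃! e, e ∈ C ∧ e ∈ p.walk.edges) ∧
    (∀ e ∈ C, ∃ p ∈ P, e ∈ p.walk.edges)

/-- The order `≼` on `st`-cuts: the `s`-side of `C` is contained in the
`s`-side of `D` (in a connected graph the `s`-side is unique). -/
def CutLE (G : Multigraph V E) (s t : V) (C D : Set E) : Prop :=
  ∃ X Y : Set V, s ∈ X ∧ t ∉ X ∧ C = G.cut X ∧ s ∈ Y ∧ t ∉ Y ∧ D = G.cut Y ∧ X ⊆ Y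

/-- A cut of the form `C_W` for some `st`-wave `W`. -/
def IsWaveCut (G : Multigraph V E) (s t : V) (C : Set E) : Prop :=
  ∃ W : Set (G.SPath s), G.IsWave s {t} W ∧ G.lastEdges W = C

/-- Deletion of a set of edges. -/
def deleteEdges (G : Multigraph V E) (F : Set E) : Multigraph V {e : E // e ∉ F} where
  inc e := G.inc e.1
  not_isDiag e := G.not_isDiag e.1

open Classical in
/-- Contraction of the vertex set `X` to the vertex `s` (edges inside `X` are
deleted, edges leaving `X` are redirected to `s`). -/
noncomputable def contract (G : Multigraph V E) (X : Set V) (s : V) :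
    Multigraph V {e : E // ¬ (Sym2.map (fun v => if v ∈ X then s else v) (G.inc e)).IsDiag} where
  inc e := Sym2.map (fun v => if v ∈ X then s else v) (G.inc e.1)
  not_isDiag e := e.2

/-- Reachability inside a set `S` of vertices. -/
def ReachableIn (G : Multigraph V E) (S : Set V) (x y : V) : Prop :=
  ∃ p : G.Walk x y, ∀ z ∈ p.support, z ∈ S

/-- `Y` is (the vertex set of) a connected component of the subgraph of `G`
induced by `S`. -/
def IsComponentOf (G : Multigraph V E) (Y S : Set V) : Prop :=
  Y.Nonempty ∧ Y ⊆ S ∧ ∀ x ∈ Y, ∀ y ∈ S, (G.ReachableIn S x y ↔ y ∈ Y)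

/-- A cycle in a multigraph (a closed walk with distinct edges whose
vertices are distinct except that the first one equals the last one). -/
structure Cycle (G : Multigraph V E) : Type (max u v) where
  base : V
  walk : G.Walk base base
  edges_ne_nil : walk.edges ≠ []
  edges_nodup : walk.edges.Nodup
  support_tail_nodup : walk.support.tail.Nodup

/-- A graph is Eulerian if its edge set can be partitioned into
edge sets of cycles. -/
def IsEulerian (G : Multigraph V E) : Prop :=
  ∃ C : Set G.Cycle,
    (∀ c ∈ C, ∀ d ∈ C, c ≠ d → ∀ e, e ∈ c.walk.edges → e ∉ d.walk.edges) ∧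
    ∀ e : E, ∃ c ∈ C, e ∈ c.walk.edges

/-- A `T`-partition: a family `{A t : t ∈ T}` of pairwise disjoint vertex sets
with `A t ∩ T = {t}`. -/
def IsTPartition (T : Set V) (A : V → Set V) : Prop :=
  (∀ t ∈ T, A t ∩ T = {t}) ∧
  ∀ t₁ ∈ T, ∀ t₂ ∈ T, t₁ ≠ t₂ → Disjoint (A t₁) (A t₂)

end Multigraph



namespace LCaux

open Cardinal

variable {V : Type u} {E : Type v}

/-- Edges of `F` crossing `X`. -/
def cutIn (inc : E → Sym2 V) (F : Set E) (X : Set V) : Set E :=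
  {e | e ∈ F ∧ ∃ x y, inc e = s(x, y) ∧ x ∈ X ∧ y ∉ X}

def NoOdd (inc : E → Sym2 V) (F : Set E) : Prop :=
  ∀ X, ¬ ((cutIn inc F X).Finite ∧ Odd (cutIn inc F X).ncard)

def Reach (inc : E → Sym2 V) (R : Set E) : V → V → Prop :=
  Relation.ReflTransGen (fun a b => ∃ e ∈ R, inc e = s(a, b))

def Hits (inc : E → Sym2 V) (S : Set E) (x y : V) : Prop :=
  ∀ X : Set V, x ∈ X → y ∉ X → (cutIn inc S X).Nonempty

def Conn (inc : E → Sym2 V) (B : Set E) (x y : V) : Prop :=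
  B.Countable ∧ ∀ X : Set V, x ∈ X → y ∉ X → (cutIn inc B X).Infinite

lemma cutIn_mono {inc : E → Sym2 V} {F F' : Set E} (h : F ⊆ F') (X : Set V) :
    cutIn inc F X ⊆ cutIn inc F' X := fun _ he => ⟨h he.1, he.2⟩

lemma reach_finset {inc : E → Sym2 V} {R : Set E} {a b : V} (h : Reach inc R a b) :
    ∃ S : Finset E, (S : Set E) ⊆ R ∧ Hits inc S a b := by
  classical
  induction h with
  | refl => exact ⟨∅, by simp, fun X h1 h2 => absurd h1 h2⟩
  | @tail b c _ hbc ih =>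
    obtain ⟨S, hS, hh⟩ := ih
    obtain ⟨e, he, hinc⟩ := hbc
    refine ⟨insert e S, by simp [Set.insert_subset_iff, he, hS], fun X ha hc => ?_⟩
    by_cases hb : b ∈ X
    · exact ⟨e, by simp, b, c, hinc, hb, hc⟩
    · obtain ⟨f, hf⟩ := hh X ha hb
      exact ⟨f, cutIn_mono (by simp) X hf⟩

lemma reach_closed {inc : E → Sym2 V} {R : Set E} {a x y : V} {e : E} (h : Reach inc R a x)
    (he : e ∈ R) (hi : inc e = s(x, y)) : Reach inc R a y :=
  Relation.ReflTransGen.tail h ⟨e, he, hi⟩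

lemma reach_symm {inc : E → Sym2 V} {R : Set E} {a b : V} (h : Reach inc R a b) :
    Reach inc R b a := by
  induction h with
  | refl => exact Relation.ReflTransGen.refl
  | tail _ h ih =>
    obtain ⟨e, he, hi⟩ := h
    exact Relation.ReflTransGen.head ⟨e, he, by rw [hi, Sym2.eq_swap]⟩ ih

lemma exists_conn {inc : E → Sym2 V} {R : Set E} {x y : V}
    (h : ∀ X : Set V, x ∈ X → y ∉ X → (cutIn inc R X).Infinite) :
    ∃ B ⊆ R, Conn inc B x y := by
  classical
  have key : ∀ S : Finset E, ∃ S' : Finset E, (S' : Set E) ⊆ R \ S ∧ Hits inc S' x y := by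
    intro S
    apply reach_finset
    by_contra hn
    refine h {v | Reach inc (R \ S) x v} Relation.ReflTransGen.refl hn
      (S.finite_toSet.subset ?_)
    rintro e ⟨heR, a, b, hi, ha, hb⟩
    by_contra heS
    exact hb (reach_closed ha ⟨heR, heS⟩ hi)
  choose f hf1 hf2 using key
  obtain ⟨A, hA0, hA⟩ : ∃ A : ℕ → Finset E, A 0 = ∅ ∧ ∀ n, A (n+1) = A n ∪ f (A n) :=
    ⟨fun n => Nat.rec ∅ (fun _ S => S ∪ f S) n, rfl, fun n => rfl⟩
  have hmono : Monotone A := monotone_nat_of_le_succ fun n => by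
    rw [hA]; exact Finset.subset_union_left
  have hcU : (⋃ n : ℕ, (↑(A n) : Set E)).Countable := by
    apply Set.countable_iUnion
    intro n
    exact (A n).countable_toSet
  refine ⟨⋃ n : ℕ, (↑(A n) : Set E), ?_, hcU, ?_⟩
  · refine Set.iUnion_subset fun n => ?_
    induction n with
    | zero => simp [hA0]
    | succ n ih =>
      rw [hA, Finset.coe_union]
      exact Set.union_subset ih fun e he => (hf1 _ he).1
  · intro X hx hy hfin
    have : ∃ n, cutIn inc (⋃ n : ℕ, (↑(A n) : Set E)) X ⊆ A n := by
      exact Set.Finite.induction_on_subset (motive := fun S _ => ∃ n, S ⊆ (A n : Set E)) _ hfin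
        ⟨0, by simp⟩ (by
          rintro a S ha - - ⟨n, hn⟩
          obtain ⟨m, hm⟩ := Set.mem_iUnion.1 ha.1
          exact ⟨max m n, Set.insert_subset (hmono (le_max_left m n) hm)
            (hn.trans (by exact_mod_cast hmono (le_max_right m n)))⟩)
    obtain ⟨n, hn⟩ := this
    obtain ⟨e, he⟩ := hf2 (A n) X hx hy
    have : e ∈ A n := hn ⟨Set.mem_iUnion.2 ⟨n+1, by rw [hA]; simp; right; exact he.1⟩, he.2⟩
    exact (hf1 _ he.1).2 this

lemma exists_family (inc : E → Sym2 V) (F : Set E) (x y : V) :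
    ∃ (B : Set (Set E)) (X : Set V), (∀ b ∈ B, b ⊆ F ∧ Conn inc b x y) ∧
      B.PairwiseDisjoint id ∧ (cutIn inc (F \ ⋃₀ B) X).Finite ∧ (x ≠ y → x ∈ X ∧ y ∉ X) := by
  by_cases hxy : x = y
  · refine ⟨∅, ∅, by simp, by simp, ?_, fun h => absurd hxy h⟩
    convert Set.finite_empty
    ext e; simp [cutIn]
  obtain ⟨B, hB⟩ := zorn_subset {B : Set (Set E) | (∀ b ∈ B, b ⊆ F ∧ Conn inc b x y) ∧
      B.PairwiseDisjoint id} (by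
    intro c hc hch
    refine ⟨⋃₀ c, ⟨?_, ?_⟩, fun s hs => Set.subset_sUnion_of_mem hs⟩
    · rintro b ⟨s, hs, hb⟩
      exact (hc hs).1 b hb
    · exact (Set.pairwiseDisjoint_sUnion hch.directedOn).2 fun s hs => (hc hs).2)
  have hBm := hB.prop
  by_cases hX : ∃ X : Set V, x ∈ X ∧ y ∉ X ∧ (cutIn inc (F \ ⋃₀ B) X).Finite
  · obtain ⟨X, h1, h2, h3⟩ := hX
    exact ⟨B, X, hBm.1, hBm.2, h3, fun _ => ⟨h1, h2⟩⟩
  · exfalso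
    push Not at hX
    obtain ⟨b, hb, hconn⟩ := exists_conn (inc := inc) (R := F \ ⋃₀ B) (x := x) (y := y)
      (fun X h1 h2 => hX X h1 h2)
    have hmem : b ∈ B := by
      apply hB.le_of_ge (y := insert b B) ⟨?_, ?_⟩ (Set.subset_insert _ _) (Set.mem_insert _ _)
      · rintro c (rfl | hc)
        · exact ⟨fun e he => (hb he).1, hconn⟩
        · exact hBm.1 c hc
      · refine hBm.2.insert fun c hc _ => ?_
        rw [Set.disjoint_left]
        intro e he hec
        exact (hb he).2 ⟨c, hc, hec⟩
    obtain ⟨e, he, -⟩ := (hconn.2 {x} rfl (by simpa using Ne.symm hxy)).nonempty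
    exact (hb he).2 ⟨b, hmem, he⟩

/-- Closed under a finitary rule. -/
def Cl (Φ : Finset E → Set E) (M : Set E) : Prop := ∀ A : Finset E, (A : Set E) ⊆ M → Φ A ⊆ M

lemma exists_rules (inc : E → Sym2 V) (F : Set E) (hF : NoOdd inc F) (p : E → Set E)
    (hpc : ∀ e, (p e).Countable) (hpF : ∀ e ∈ F, p e ⊆ F) :
    ∃ (Φ : Finset E → Set E) (N : Set E → Finset E → Set E),
      (∀ A, (Φ A).Countable) ∧ (∀ M A, (N M A).Countable) ∧
      (∀ A : Finset E, (A : Set E) ⊆ F → Φ A ⊆ F) ∧ (∀ M A, N M A ⊆ F) ∧ Φ ∅ = ∅ ∧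
      (∀ M, Cl Φ M → ∀ e ∈ M, p e ⊆ M) ∧
      (∀ M M', Cl Φ M → Cl Φ M' → M ⊆ M' → M' ⊆ F →
        (∀ A : Finset E, (A : Set E) ⊆ M → N M A ⊆ M') → NoOdd inc (M' \ M)) := by
  classical
  choose B X hB hBd hfin hsep using exists_family inc F
  have hP : ∀ (x y : V) (C : Finset E), ∃ S : Finset E, (S : Set E) ⊆ F \ C ∧
      (Reach inc (F \ C) x y → Hits inc S x y) := by
    intro x y C
    by_cases h : Reach inc (F \ C) x y
    · obtain ⟨S, h1, h2⟩ := reach_finset h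
      exact ⟨S, h1, fun _ => h2⟩
    · exact ⟨∅, by simp, fun h' => absurd h' h⟩
  choose P hP1 hP2 using hP
  have hnb : ∀ (x y : V) (M : Set E), ∃ b : Set E, b.Countable ∧ b ⊆ F ∧
      ((∃ b' ∈ B x y, Disjoint b' M) → b ∈ B x y ∧ Disjoint b M) := by
    intro x y M
    by_cases h : ∃ b' ∈ B x y, Disjoint b' M
    · obtain ⟨b, h1, h2⟩ := h
      exact ⟨b, (hB x y b h1).2.1, (hB x y b h1).1, fun _ => ⟨h1, h2⟩⟩
    · exact ⟨∅, by simp, by simp, fun h' => absurd h' h⟩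
  choose nb hnb1 hnb2 hnb3 using hnb
  have hsym : ∀ z : Sym2 V, {x | x ∈ z}.Countable := by
    intro z
    induction z with
    | h a b => exact ((Set.finite_singleton b).insert a).countable.mono (by intro x; simp)
  let Φ : Finset E → Set E := fun A =>
    (⋃ a ∈ A, ⋃ b ∈ A, ⋃ x ∈ {x | x ∈ inc a}, ⋃ y ∈ {y | y ∈ inc b},
      (cutIn inc (F \ ⋃₀ B x y) (X x y) ∪ (⋃ c ∈ A, ⋃ d ∈ {d | d ∈ B x y ∧ c ∈ d}, d) ∪
        (⋃ C ∈ A.powerset, (P x y C : Set E)))) ∪ ⋃ a ∈ A, p a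
  let N : Set E → Finset E → Set E := fun M A =>
    ⋃ a ∈ A, ⋃ b ∈ A, ⋃ x ∈ {x | x ∈ inc a}, ⋃ y ∈ {y | y ∈ inc b}, nb x y M
  -- consequences of closedness
  have c1 : ∀ M, Cl Φ M → ∀ a ∈ M, ∀ b ∈ M, ∀ x ∈ inc a, ∀ y ∈ inc b,
      cutIn inc (F \ ⋃₀ B x y) (X x y) ⊆ M := by
    intro M hM a ha b hb x hx y hy e he
    apply hM {a, b} (by simp [Set.insert_subset_iff, ha, hb])
    left
    simp only [Set.mem_iUnion]
    exact ⟨a, by simp, b, by simp, x, hx, y, hy, Or.inl (Or.inl he)⟩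
  have c2 : ∀ M, Cl Φ M → ∀ a ∈ M, ∀ b ∈ M, ∀ x ∈ inc a, ∀ y ∈ inc b,
      ∀ d ∈ B x y, ∀ c ∈ M, c ∈ d → d ⊆ M := by
    intro M hM a ha b hb x hx y hy d hd c hc hcd e he
    apply hM {a, b, c} (by simp [Set.insert_subset_iff, ha, hb, hc])
    left
    simp only [Set.mem_iUnion]
    refine ⟨a, by simp, b, by simp, x, hx, y, hy, Or.inl (Or.inr ?_)⟩
    simp only [Set.mem_iUnion]
    exact ⟨c, by simp, d, ⟨hd, hcd⟩, he⟩
  have c3 : ∀ M, Cl Φ M → ∀ a ∈ M, ∀ b ∈ M, ∀ x ∈ inc a, ∀ y ∈ inc b,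
      ∀ C : Finset E, (C : Set E) ⊆ M → (P x y C : Set E) ⊆ M := by
    intro M hM a ha b hb x hx y hy C hC e he
    apply hM (insert a (insert b C)) (by simp [Set.insert_subset_iff, ha, hb, hC])
    left
    simp only [Set.mem_iUnion]
    refine ⟨a, by simp, b, by simp, x, hx, y, hy, Or.inr ?_⟩
    simp only [Set.mem_iUnion]
    refine ⟨C, ?_, he⟩
    rw [Finset.mem_powerset]
    intro z hz; simp [hz]
  have c4 : ∀ M, Cl Φ M → ∀ e ∈ M, p e ⊆ M := by
    intro M hM e he f hf
    apply hM {e} (by simpa using he)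
    right
    simpa using hf
  refine ⟨Φ, N, ?_, ?_, ?_, ?_, ?_, c4, ?_⟩
  · intro A
    refine Set.Countable.union ?_ (A.countable_toSet.biUnion fun a _ => hpc a)
    refine A.countable_toSet.biUnion fun a _ => A.countable_toSet.biUnion fun b _ =>
      (hsym _).biUnion fun x _ => (hsym _).biUnion fun y _ => ?_
    refine Set.Countable.union (Set.Countable.union (hfin x y).countable ?_) ?_
    · refine A.countable_toSet.biUnion fun c _ => ?_
      refine Set.Countable.biUnion ?_ fun d hd => (hB x y d hd.1).2.1
      apply Set.Subsingleton.countable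
      intro d hd d' hd'
      exact (hBd x y).elim_set hd.1 hd'.1 c hd.2 hd'.2
    · exact (Finset.countable_toSet _).biUnion fun C _ => Finset.countable_toSet _
  · intro M A
    exact A.countable_toSet.biUnion fun a _ => A.countable_toSet.biUnion fun b _ =>
      (hsym _).biUnion fun x _ => (hsym _).biUnion fun y _ => hnb1 x y M
  · intro A hA e he
    rcases he with he | he
    · simp only [Set.mem_iUnion] at he
      obtain ⟨a, -, b, -, x, -, y, -, (he | he) | he⟩ := he
      · exact he.1.1
      · simp only [Set.mem_iUnion] at he
        obtain ⟨c, -, d, hd, he⟩ := he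
        exact (hB x y d hd.1).1 he
      · simp only [Set.mem_iUnion] at he
        obtain ⟨C, -, he⟩ := he
        exact (hP1 x y C he).1
    · simp only [Set.mem_iUnion] at he
      obtain ⟨a, ha, he⟩ := he
      exact hpF a (hA ha) he
  · intro M A e he
    simp only [N, Set.mem_iUnion] at he
    obtain ⟨a, -, b, -, x, -, y, -, he⟩ := he
    exact hnb2 x y M he
  · simp [Φ]
  · intro M M' hM hM' hMM hMF hN Y0 hY0
    -- step 0: minimal odd cut
    have hmin : ∃ Y : Set V, ((cutIn inc (M' \ M) Y).Finite ∧ Odd (cutIn inc (M' \ M) Y).ncard) ∧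
        ∀ Z : Set V, ((cutIn inc (M' \ M) Z).Finite ∧ Odd (cutIn inc (M' \ M) Z).ncard) →
          (cutIn inc (M' \ M) Y).ncard ≤ (cutIn inc (M' \ M) Z).ncard := by
      have hne : {Y : Set V | ((cutIn inc (M' \ M) Y).Finite ∧
        Odd (cutIn inc (M' \ M) Y).ncard)}.Nonempty := ⟨Y0, hY0⟩
      obtain ⟨Y, hY, hm⟩ := WellFounded.has_min
        (measure fun Y : Set V => (cutIn inc (M' \ M) Y).ncard).wf _ hne
      exact ⟨Y, hY, fun Z hZ => not_lt.1 (hm Z hZ)⟩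
    obtain ⟨Y, ⟨hYf, hYo⟩, hYmin⟩ := hmin
    obtain ⟨e0, he0⟩ : (cutIn inc (M' \ M) Y).Nonempty := by
      rw [← Set.ncard_pos hYf]; exact hYo.pos
    obtain ⟨he0D, x0, y0, hi0, hx0, hy0⟩ := id he0
    let K : Set V := {v | Reach inc (F \ M) x0 v}
    have hDF : M' \ M ⊆ F \ M := fun e he => ⟨hMF he.1, he.2⟩
    -- edges of D do not cross K
    have hK : ∀ e ∈ M' \ M, ∀ a b, inc e = s(a, b) → a ∈ K → b ∈ K :=
      fun e he a b hi ha => reach_closed ha (hDF he) hi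
    have hreachsymm : ∀ a b, a ∈ K → b ∈ K → Reach inc (F \ M) a b := by
      intro a b ha hb
      exact (reach_symm ha).trans hb
    have hK' : ∀ e ∈ M' \ M, ∀ a b, inc e = s(a, b) → b ∈ K → a ∈ K :=
      fun e he a b hi hb => hK e he b a (by rw [hi, Sym2.eq_swap]) hb
    have hsplit : cutIn inc (M' \ M) Y =
        cutIn inc (M' \ M) (Y ∩ K) ∪ cutIn inc (M' \ M) (Y \ K) := by
      ext e
      constructor
      · rintro ⟨he, a, b, hi, ha, hb⟩
        by_cases haK : a ∈ K
        · exact Or.inl ⟨he, a, b, hi, ⟨ha, haK⟩, fun h => hb h.1⟩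
        · exact Or.inr ⟨he, a, b, hi, ⟨ha, haK⟩, fun h => hb h.1⟩
      · rintro (⟨he, a, b, hi, ha, hb⟩ | ⟨he, a, b, hi, ha, hb⟩)
        · exact ⟨he, a, b, hi, ha.1, fun h => hb ⟨h, hK e he a b hi ha.2⟩⟩
        · exact ⟨he, a, b, hi, ha.1, fun h => hb ⟨h, fun h' => ha.2 (hK' e he a b hi h')⟩⟩
    have hdisj : Disjoint (cutIn inc (M' \ M) (Y ∩ K)) (cutIn inc (M' \ M) (Y \ K)) := by
      rw [Set.disjoint_left]
      rintro e ⟨he, a, b, hi, ha, hb⟩ ⟨_, a', b', hi', ha', hb'⟩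
      rw [hi] at hi'
      rcases Sym2.eq_iff.1 hi' with ⟨rfl, rfl⟩ | ⟨rfl, rfl⟩
      · exact ha'.2 ha.2
      · exact ha'.2 (hK e he _ _ hi ha.2)
    have hf1 : (cutIn inc (M' \ M) (Y ∩ K)).Finite := hYf.subset (by rw [hsplit]; simp)
    have hf2 : (cutIn inc (M' \ M) (Y \ K)).Finite := hYf.subset (by rw [hsplit]; simp)
    have hcard := Set.ncard_union_eq hdisj hf1 hf2
    rw [← hsplit] at hcard
    have hx0K : x0 ∈ K := Relation.ReflTransGen.refl
    have hpos : 0 < (cutIn inc (M' \ M) (Y ∩ K)).ncard := by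
      rw [Set.ncard_pos hf1]
      exact ⟨e0, he0D, x0, y0, hi0, ⟨hx0, hx0K⟩, fun h => hy0 h.1⟩
    have hodd : Odd (cutIn inc (M' \ M) (Y ∩ K)).ncard := by
      by_contra hne
      have h2 : Odd (cutIn inc (M' \ M) (Y \ K)).ncard := by
        rw [hcard] at hYo
        rw [Nat.odd_add] at hYo
        by_contra hh
        exact hne (hYo.2 (Nat.not_odd_iff_even.1 hh))
      have := hYmin _ ⟨hf2, h2⟩
      omega
    have heqc : cutIn inc (M' \ M) (K \ Y) = cutIn inc (M' \ M) (Y ∩ K) := by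
      ext e
      constructor
      · rintro ⟨he, a, b, hi, ha, hb⟩
        have hbK := hK e he a b hi ha.1
        refine ⟨he, b, a, by rw [hi, Sym2.eq_swap], ⟨?_, hbK⟩, fun h => ha.2 h.1⟩
        by_contra h; exact hb ⟨hbK, h⟩
      · rintro ⟨he, a, b, hi, ha, hb⟩
        have hbK := hK e he a b hi ha.2
        exact ⟨he, b, a, by rw [hi, Sym2.eq_swap], ⟨hbK, fun h => hb ⟨h, hbK⟩⟩, fun h => h.2 ha.1⟩
    -- the vertices of M in K lie on one side of Y
    have hside : ∀ a ∈ M, ∀ b ∈ M, ∀ x ∈ inc a, ∀ y ∈ inc b, x ∈ K → y ∈ K →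
        x ∈ Y → y ∈ Y := by
      intro a ha b hb x hx y hy hxK hyK hxY
      by_contra hyY
      have hxy : x ≠ y := fun h => hyY (h ▸ hxY)
      by_cases hd : ∃ b' ∈ B x y, Disjoint b' M
      · obtain ⟨h1, h2⟩ := hnb3 x y M hd
        have h3 : nb x y M ⊆ M' := by
          refine Set.Subset.trans ?_ (hN {a, b} (by simp [Set.insert_subset_iff, ha, hb]))
          intro e he
          simp only [N, Set.mem_iUnion]
          exact ⟨a, by simp, b, by simp, x, hx, y, hy, he⟩
        refine (hB x y _ h1).2.2 Y hxY hyY (hYf.subset (cutIn_mono ?_ Y))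
        exact fun e he => ⟨h3 he, Set.disjoint_left.1 h2 he⟩
      · push Not at hd
        have hall : ∀ d ∈ B x y, d ⊆ M := by
          intro d hd'
          obtain ⟨c, hc1, hc2⟩ := Set.not_disjoint_iff.1 (hd d hd')
          exact c2 M hM a ha b hb x hx y hy d hd' c hc2 hc1
        have hc := c1 M hM a ha b hb x hx y hy
        obtain ⟨S, hS1, hS2⟩ := reach_finset (hreachsymm x y hxK hyK)
        obtain ⟨f, hf, hf'⟩ := hS2 (X x y) (hsep x y hxy).1 (hsep x y hxy).2
        have hfM := (hS1 hf)
        refine hfM.2 (hc ⟨⟨hfM.1, ?_⟩, hf'⟩)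
        rintro ⟨d, hd1, hd2⟩
        exact hfM.2 (hall d hd1 hd2)
    have hY' : ∃ Y' : Set V, (cutIn inc (M' \ M) Y').Finite ∧ Odd (cutIn inc (M' \ M) Y').ncard ∧
        ∀ a ∈ M, ∀ x ∈ inc a, x ∉ Y' := by
      by_cases h : ∃ a ∈ M, ∃ x ∈ inc a, x ∈ Y ∩ K
      · obtain ⟨a, ha, x, hx, hxY⟩ := h
        refine ⟨K \ Y, by rwa [heqc], by rwa [heqc], fun b hb y hy hyK => ?_⟩
        exact hyK.2 (hside a ha b hb x hx y hy hxY.2 hyK.1 hxY.1)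
      · push Not at h
        exact ⟨Y ∩ K, hf1, hodd, h⟩
    obtain ⟨Y', hfin', hodd', hav⟩ := hY'
    have hcM' : cutIn inc M' Y' = cutIn inc (M' \ M) Y' := by
      apply Set.Subset.antisymm _ (cutIn_mono Set.sdiff_subset _)
      rintro e ⟨he, a, b, hi, ha, hb⟩
      refine ⟨⟨he, fun heM => hav e heM a (by rw [hi]; simp) ha⟩, a, b, hi, ha, hb⟩
    rw [← hcM'] at hfin' hodd'
    set C : Finset E := hfin'.toFinset with hC
    have hCc : (C : Set E) = cutIn inc M' Y' := by simp [hC]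
    have hCM : (C : Set E) ⊆ M' := by rw [hCc]; exact fun e he => he.1
    let X' : Set V := {v | ∃ a ∈ M', ∃ x ∈ inc a, x ∈ Y' ∧ Reach inc (F \ C) x v}
    have hcut : cutIn inc F X' = C := by
      apply Set.Subset.antisymm
      · rintro e ⟨he, a, b, hi, ⟨c, hc, x, hx, hxY, hr⟩, hb⟩
        by_contra heC
        exact hb ⟨c, hc, x, hx, hxY, reach_closed hr ⟨he, heC⟩ hi⟩
      · intro e he
        have he' := he
        rw [hCc] at he'
        obtain ⟨heM, a, b, hi, ha, hb⟩ := he'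
        refine ⟨hMF heM, a, b, hi, ⟨e, heM, a, by rw [hi]; simp, ha, Relation.ReflTransGen.refl⟩, ?_⟩
        rintro ⟨c, hc, x, hx, hxY, hr⟩
        obtain ⟨f, hf, hf'⟩ := hP2 x b C hr Y' hxY hb
        have hfM := c3 M' hM' c hc e heM x hx b (by rw [hi]; simp) C hCM hf
        have : f ∈ (C : Set E) := by rw [hCc]; exact ⟨hfM, hf'⟩
        exact (hP1 x b C hf).2 this
    apply hF X'
    rw [hcut, hCc]
    exact ⟨hfin', hodd'⟩

lemma mk_iUnion_le_of {ι : Type v} (f : ι → Set E) (k : Cardinal.{v}) (hk : ℵ₀ ≤ k)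
    (h1 : #ι ≤ k) (h2 : ∀ i, #(f i) ≤ k) : #(⋃ i, f i) ≤ k :=
  (mk_iUnion_le f).trans (mul_le_of_le hk h1 (ciSup_le' h2))

/-- All consequences of a finitary rule applied to `S`. -/
def app (Φ : Finset E → Set E) (S : Set E) : Set E := ⋃ A : {A : Finset E // (A : Set E) ⊆ S}, Φ A

lemma mk_app (Φ : Finset E → Set E) (hΦ : ∀ A, (Φ A).Countable) (S : Set E) (k : Cardinal.{v})
    (hk : ℵ₀ ≤ k) (hS : #S ≤ k) : #(app Φ S) ≤ k := by
  classical
  refine mk_iUnion_le_of _ k hk ?_ fun A => (hΦ A).le_aleph0.trans hk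
  have h1 : #{A : Finset E // (A : Set E) ⊆ S} ≤ #(List S) := by
    refine mk_le_of_surjective (f := fun l : List S => ⟨(l.map Subtype.val).toFinset, ?_⟩) ?_
    · intro x hx
      simp at hx
      exact hx.1
    · rintro ⟨A, hA⟩
      refine ⟨A.toList.attach.map fun x => ⟨x.1, hA (by simpa using x.2)⟩, ?_⟩
      apply Subtype.ext
      ext x
      simp
  exact h1.trans ((mk_list_le_max S).trans (max_le hk hS))

lemma exists_closure (Φ : Finset E → Set E) (hΦ : ∀ A, (Φ A).Countable) (F : Set E)
    (hF : ∀ A : Finset E, (A : Set E) ⊆ F → Φ A ⊆ F) (S : Set E) (hS : S ⊆ F)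
    (k : Cardinal.{v}) (hk : ℵ₀ ≤ k) (hSk : #S ≤ k) :
    ∃ M, S ⊆ M ∧ M ⊆ F ∧ Cl Φ M ∧ #M ≤ k := by
  classical
  let A : ℕ → Set E := fun n => Nat.rec S (fun _ S => S ∪ app Φ S) n
  have hA : ∀ n, A (n+1) = A n ∪ app Φ (A n) := fun n => rfl
  have hmono : Monotone A := monotone_nat_of_le_succ fun n => by
    rw [hA]; exact Set.subset_union_left
  refine ⟨⋃ n, A n, Set.subset_iUnion A 0, Set.iUnion_subset fun n => ?_, ?_, ?_⟩
  · induction n with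
    | zero => exact hS
    | succ n ih =>
      rw [hA]
      exact Set.union_subset ih (Set.iUnion_subset fun B => hF _ (B.2.trans ih))
  · intro B hB
    obtain ⟨n, hn⟩ : ∃ n, (B : Set E) ⊆ A n := by
      induction B using Finset.induction_on with
      | empty => exact ⟨0, by simp⟩
      | insert a B _ ih =>
        rw [Finset.coe_insert, Set.insert_subset_iff] at hB
        obtain ⟨n, hn⟩ := ih hB.2
        obtain ⟨m, hm⟩ := Set.mem_iUnion.1 hB.1
        refine ⟨max m n, ?_⟩
        rw [Finset.coe_insert]
        exact Set.insert_subset (hmono (le_max_left m n) hm) (hn.trans (hmono (le_max_right m n)))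
    refine Set.Subset.trans ?_ (Set.subset_iUnion A (n+1))
    rw [hA]
    exact Set.subset_union_of_subset_right
      (Set.subset_iUnion (fun B : {B : Finset E // (B : Set E) ⊆ A n} => Φ B) ⟨B, hn⟩) _
  · have hAk : ∀ n, #(↥(A n)) ≤ k := by
      intro n
      induction n with
      | zero => exact hSk
      | succ n ih =>
        rw [hA]
        exact (mk_union_le _ _).trans (add_le_of_le hk ih (mk_app Φ hΦ _ k hk ih))
    rw [← Set.iUnion_congr fun n => rfl]
    have := mk_iUnion_le_lift (ι := ℕ) A
    rw [lift_uzero] at this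
    refine this.trans (mul_le_of_le hk (by simpa using hk) (ciSup_le' fun n => ?_))
    simpa using hAk n

lemma exists_chain (Φ : Finset E → Set E) (N : Set E → Finset E → Set E)
    (hΦ : ∀ A, (Φ A).Countable) (hN : ∀ M A, (N M A).Countable) (F : Set E)
    (hΦF : ∀ A : Finset E, (A : Set E) ⊆ F → Φ A ⊆ F) (hNF : ∀ M A, N M A ⊆ F)
    (hΦ0 : Φ ∅ = ∅) (hunc : ℵ₀ < #F) :
    ∃ (M M' : F → Set E), (∀ i, Cl Φ (M i) ∧ Cl Φ (M' i) ∧ M i ⊆ M' i ∧ M' i ⊆ F ∧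
        (∀ A : Finset E, (A : Set E) ⊆ M i → N (M i) A ⊆ M' i) ∧ #(M' i) < #F) ∧
      (∀ i j, i ≠ j → Disjoint (M' i \ M i) (M' j \ M j)) ∧ (⋃ i, (M' i \ M i)) = F := by
  classical
  obtain ⟨r, wo, hr⟩ := exists_ord_eq F
  have hg : ∀ (i : F) (S : Set E), ∃ M', S ⊆ F → (i.1 ∈ M' ∧ S ⊆ M' ∧ M' ⊆ F ∧ Cl Φ M' ∧
      app (N S) S ⊆ M' ∧ #M' ≤ max ℵ₀ #S) := by
    intro i S
    by_cases hS : S ⊆ F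
    · obtain ⟨M', h1, h2, h3, h4⟩ := exists_closure Φ hΦ F hΦF (insert i.1 (S ∪ app (N S) S))
        (Set.insert_subset i.2 (Set.union_subset hS (Set.iUnion_subset fun A => hNF _ _)))
        (max ℵ₀ #S) (le_max_left _ _) (by
          refine mk_insert_le.trans (add_le_of_le (le_max_left _ _) ?_
            (one_le_aleph0.trans (le_max_left _ _)))
          exact (mk_union_le _ _).trans (add_le_of_le (le_max_left _ _) (le_max_right _ _)
            (mk_app _ (hN S) _ _ (le_max_left _ _) (le_max_right _ _))))
      rw [Set.insert_subset_iff, Set.union_subset_iff] at h1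
      exact ⟨M', fun _ => ⟨h1.1, h1.2.1, h2, h3, h1.2.2, h4⟩⟩
    · exact ⟨∅, fun h => absurd h hS⟩
  choose g hg using hg
  let M' : F → Set E := wo.wf.fix fun i f => g i (⋃ j : {j // r j i}, f j.1 j.2)
  let M : F → Set E := fun i => ⋃ j : {j // r j i}, M' j.1
  have hM' : ∀ i, M' i = g i (M i) := fun i => wo.wf.fix_eq _ i
  have hF : ∀ i, M i ⊆ F := by
    intro i
    induction i using wo.wf.induction with
    | h i ih =>
      refine Set.iUnion_subset fun j => ?_
      rw [hM']
      exact (hg j.1 _ (ih j.1 j.2)).2.2.1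
  have hG : ∀ i, i.1 ∈ M' i ∧ M i ⊆ M' i ∧ M' i ⊆ F ∧ Cl Φ (M' i) ∧
      app (N (M i)) (M i) ⊆ M' i ∧ #(M' i) ≤ max ℵ₀ #(M i) := by
    intro i
    rw [hM']
    exact hg i _ (hF i)
  have hlt : ∀ i j, r j i → M' j ⊆ M i := fun i j h =>
    Set.subset_iUnion (fun j : {j // r j i} => M' j.1) ⟨j, h⟩
  have hcl : ∀ i, Cl Φ (M i) := by
    intro i A hA
    by_cases hA0 : A = ∅
    · rw [hA0, hΦ0]; simp
    have : ∃ j, r j i ∧ (A : Set E) ⊆ M' j := by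
      have hne : ∃ j, r j i := by
        obtain ⟨a, ha⟩ := Finset.nonempty_iff_ne_empty.2 hA0
        obtain ⟨⟨m, hmi⟩, hm⟩ := Set.mem_iUnion.1 (hA ha)
        exact ⟨m, hmi⟩
      clear hA0
      induction A using Finset.induction_on with
      | empty => exact hne.imp fun j h => ⟨h, by simp⟩
      | insert a B _ ih =>
        rw [Finset.coe_insert, Set.insert_subset_iff] at hA
        obtain ⟨n, hni, hn⟩ := ih hA.2
        obtain ⟨⟨m, hmi⟩, hm⟩ := Set.mem_iUnion.1 hA.1
        rw [Finset.coe_insert]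
        rcases trichotomous_of r m n with h | h | h
        · exact ⟨n, hni, Set.insert_subset ((hG n).2.1 (hlt n m h hm)) hn⟩
        · subst h; exact ⟨m, hmi, Set.insert_subset hm hn⟩
        · exact ⟨m, hmi, Set.insert_subset hm (hn.trans ((hlt m n h).trans (hG m).2.1))⟩
    obtain ⟨j, hj, hAj⟩ := this
    exact ((hG j).2.2.2.1 A hAj).trans (hlt i j hj)
  have hcard : ∀ i, #(M i) ≤ max ℵ₀ #{j // r j i} := by
    intro i
    induction i using wo.wf.induction with
    | h i ih =>
      refine mk_iUnion_le_of _ _ (le_max_left _ _) (le_max_right _ _) fun j => ?_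
      refine (hG j.1).2.2.2.2.2.trans (max_le (le_max_left _ _) ((ih j.1 j.2).trans ?_))
      refine max_le_max le_rfl ?_
      exact mk_subtype_mono fun k hk => _root_.trans hk j.2
  have hfin : ∀ i, #(M' i) < #F := by
    intro i
    refine (hG i).2.2.2.2.2.trans_lt (max_lt hunc ((hcard i).trans_lt (max_lt hunc ?_)))
    have := card_typein_lt (r := r) i hr
    rwa [Ordinal.card_typein] at this
  refine ⟨M, M', fun i => ⟨hcl i, (hG i).2.2.2.1, (hG i).2.1, (hG i).2.2.1, ?_, hfin i⟩, ?_, ?_⟩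
  · intro A hA
    exact Set.Subset.trans (Set.subset_iUnion
      (fun B : {B : Finset E // (B : Set E) ⊆ M i} => N (M i) B) ⟨A, hA⟩) (hG i).2.2.2.2.1
  · intro i j hij
    rw [Set.disjoint_left]
    rintro e ⟨h1, h2⟩ ⟨h3, h4⟩
    rcases trichotomous_of r i j with h | h | h
    · exact h4 (hlt j i h h1)
    · exact hij h
    · exact h2 (hlt i j h h3)
  · apply Set.Subset.antisymm
    · exact Set.iUnion_subset fun i e he => (hG i).2.2.1 he.1
    · intro e he
      have hne : {i : F | e ∈ M' i}.Nonempty := ⟨⟨e, he⟩, (hG ⟨e, he⟩).1⟩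
      obtain ⟨i, hi, hmin⟩ := wo.wf.has_min _ hne
      refine Set.mem_iUnion.2 ⟨i, hi, fun h => ?_⟩
      obtain ⟨⟨j, hj⟩, hej⟩ := Set.mem_iUnion.1 h
      exact hmin j hej hj


theorem decomp (inc : E → Sym2 V) (p : E → Set E) (hpc : ∀ e, (p e).Countable)
    (hps : ∀ e f, f ∈ p e → e ∈ p f) : ∀ (k : Cardinal.{v}) (F : Set E), #F = k → NoOdd inc F →
      (∀ e ∈ F, p e ⊆ F) → ∃ D : Set (Set E), (∀ d ∈ D, d ⊆ F ∧ d.Countable ∧ NoOdd inc d ∧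
        ∀ e ∈ d, p e ⊆ d) ∧ D.PairwiseDisjoint id ∧ ⋃₀ D = F := by
  intro k
  induction k using WellFoundedLT.induction with
  | ind k ih =>
    intro F hFk hF hpF
    by_cases hc : F.Countable
    · exact ⟨{F}, by simp [hc, hF]; exact hpF, by simp, by simp⟩
    have hunc : ℵ₀ < #F := by
      rw [← not_le]; exact fun h => hc (Set.countable_coe_iff.1 (mk_le_aleph0_iff.1 h))
    obtain ⟨Φ, N, h1, h2, h3, h4, h5, h6, h7⟩ := exists_rules inc F hF p hpc hpF
    obtain ⟨M, M', hM, hdis, hun⟩ := exists_chain Φ N h1 h2 F h3 h4 h5 hunc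
    have hpiece : ∀ i : F, ∃ D : Set (Set E), (∀ d ∈ D, d ⊆ M' i \ M i ∧ d.Countable ∧
        NoOdd inc d ∧ ∀ e ∈ d, p e ⊆ d) ∧ D.PairwiseDisjoint id ∧ ⋃₀ D = M' i \ M i := by
      intro i
      obtain ⟨c1, c2, c3, c4, c5, c6⟩ := hM i
      refine ih (#↥(M' i \ M i)) ?_ _ rfl (h7 _ _ c1 c2 c3 c4 c5) ?_
      · exact (mk_le_mk_of_subset Set.sdiff_subset).trans_lt (hFk ▸ c6)
      · intro e he f hf
        exact ⟨h6 _ c2 e he.1 hf, fun hfM => he.2 (h6 _ c1 f hfM (hps e f hf))⟩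
    choose D hD1 hD2 hD3 using hpiece
    refine ⟨⋃ i, D i, ?_, ?_, ?_⟩
    · intro d hd
      obtain ⟨i, hi⟩ := Set.mem_iUnion.1 hd
      obtain ⟨q1, q2⟩ := hD1 i d hi
      exact ⟨q1.trans fun e he => (hM i).2.2.2.1 he.1, q2⟩
    · intro d hd d' hd' hne
      obtain ⟨i, hi⟩ := Set.mem_iUnion.1 hd
      obtain ⟨j, hj⟩ := Set.mem_iUnion.1 hd'
      by_cases hij : i = j
      · subst hij; exact hD2 i hi hj hne
      · exact (hdis i j hij).mono (hD1 i d hi).1 (hD1 j d' hj).1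
    · rw [Set.sUnion_iUnion]
      exact (Set.iUnion_congr hD3).trans hun

end LCaux

namespace LCaux

variable {V : Type u} {E : Type v} {G : Multigraph V E}

open Multigraph

lemma start_mem {a b : V} (w : G.Walk a b) : a ∈ w.support := by
  cases w <;> simp [Walk.support]

lemma end_mem {a b : V} (w : G.Walk a b) : b ∈ w.support := by
  induction w with
  | nil => simp [Walk.support]
  | cons e he p ih => simp [Walk.support, ih]

lemma support_eq {a b : V} (w : G.Walk a b) : ∃ l, w.support = a :: l := by
  cases w <;> simp [Walk.support]

lemma mem_support_of_edge {a b : V} (w : G.Walk a b) {e : E} (he : e ∈ w.edges) {x : V}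
    (hx : x ∈ G.inc e) : x ∈ w.support := by
  induction w with
  | nil => simp [Walk.edges] at he
  | @cons u v w f hf p ih =>
    simp only [Walk.edges, List.mem_cons] at he
    rcases he with rfl | he
    · rw [hf, Sym2.mem_iff] at hx
      rcases hx with rfl | rfl
      · exact start_mem _
      · simp [Walk.support, start_mem p]
    · simp [Walk.support, ih he]

lemma exists_append {a b c : V} (w : G.Walk a b) (w' : G.Walk b c) : ∃ q : G.Walk a c,
    q.support = w.support ++ w'.support.tail ∧ q.edges = w.edges ++ w'.edges := by
  induction w with
  | nil v =>
    refine ⟨w', ?_, by simp [Walk.edges]⟩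
    obtain ⟨l, hl⟩ := support_eq w'
    simp [Walk.support, hl]
  | cons e he p ih =>
    obtain ⟨q, h1, h2⟩ := ih w'
    exact ⟨.cons e he q, by simp [Walk.support, h1], by simp [Walk.edges, h2]⟩

lemma exists_reverse {a b : V} (w : G.Walk a b) : ∃ q : G.Walk b a,
    q.support = w.support.reverse ∧ q.edges = w.edges.reverse := by
  induction w with
  | nil v => exact ⟨.nil v, by simp [Walk.support], by simp [Walk.edges]⟩
  | @cons u v w e he p ih =>
    obtain ⟨q, h1, h2⟩ := ih
    obtain ⟨q', h3, h4⟩ := exists_append q (.cons e (by rw [he, Sym2.eq_swap]) (.nil u))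
    exact ⟨q', by simp [h3, h1, Walk.support], by simp [h4, h2, Walk.edges]⟩

lemma exists_suffix {a b x : V} (w : G.Walk a b) (hx : x ∈ w.support) : ∃ q : G.Walk x b,
    q.support <:+ w.support ∧ q.edges <:+ w.edges := by
  induction w with
  | nil v =>
    simp only [Walk.support, List.mem_singleton] at hx
    subst hx
    exact ⟨.nil x, List.suffix_refl _, List.suffix_refl _⟩
  | @cons u v w e he p ih =>
    by_cases h : x = u
    · subst h
      exact ⟨.cons e he p, List.suffix_refl _, List.suffix_refl _⟩
    · simp only [Walk.support, List.mem_cons, h, false_or] at hx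
      obtain ⟨q, h1, h2⟩ := ih hx
      exact ⟨q, h1.trans (List.suffix_cons _ _), h2.trans (List.suffix_cons _ _)⟩

lemma exists_last_edge {a b : V} (w : G.Walk a b) (h : a ≠ b) : ∃ e ∈ w.edges, b ∈ G.inc e := by
  induction w with
  | nil => exact absurd rfl h
  | @cons u v w e he p ih =>
    by_cases hv : v = w
    · subst hv; exact ⟨e, by simp [Walk.edges], by rw [he]; simp⟩
    · obtain ⟨f, h1, h2⟩ := ih hv
      exact ⟨f, by simp [Walk.edges, h1], h2⟩

lemma first_edge_unique {a b : V} (w : G.Walk a b) (h : w.support.Nodup) {e f : E}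
    (he : e ∈ w.edges) (hf : f ∈ w.edges) (hae : a ∈ G.inc e) (haf : a ∈ G.inc f) : e = f := by
  cases w with
  | nil => simp [Walk.edges] at he
  | cons g hg p =>
    simp only [Walk.support, List.nodup_cons] at h
    simp only [Walk.edges, List.mem_cons] at he hf
    rcases he with rfl | he
    · rcases hf with rfl | hf
      · rfl
      · exact absurd (mem_support_of_edge p hf haf) h.1
    · exact absurd (mem_support_of_edge p he hae) h.1

lemma edges_nodup {a b : V} (w : G.Walk a b) (h : w.support.Nodup) : w.edges.Nodup := by
  induction w with
  | nil => simp [Walk.edges]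
  | cons e he p ih =>
    simp only [Walk.support, List.nodup_cons] at h
    simp only [Walk.edges, List.nodup_cons]
    exact ⟨fun hm => h.1 (mem_support_of_edge p hm (by rw [he]; simp)), ih h.2⟩

open Classical in
lemma walk_parity {a b : V} (w : G.Walk a b) (X : Set V) :
    Even ((w.edges.filter fun e => e ∈ G.cut X).length + (if a ∈ X then 1 else 0) +
      (if b ∈ X then 1 else 0)) := by
  induction w with
  | nil v => by_cases h : v ∈ X <;> simp [Walk.edges, h]
  | @cons u v w e he p ih =>
    have hc : e ∈ G.cut X ↔ ¬ (u ∈ X ↔ v ∈ X) := by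
      constructor
      · rintro ⟨x, y, hi, hx, hy⟩
        rw [he] at hi
        rcases Sym2.eq_iff.1 hi with ⟨rfl, rfl⟩ | ⟨rfl, rfl⟩ <;> tauto
      · intro h
        by_cases hu : u ∈ X
        · exact ⟨u, v, he, hu, by tauto⟩
        · exact ⟨v, u, by rw [he, Sym2.eq_swap], by tauto, hu⟩
    simp only [Walk.edges, List.filter_cons]
    by_cases hu : u ∈ X <;> by_cases hv : v ∈ X <;> by_cases hw : w ∈ X <;>
      simp [hc, hu, hv, hw] at ih ⊢ <;> grind

lemma path_parity {a b : V} (w : G.Walk a b) (h : w.support.Nodup) (X : Set V) (ha : a ∉ X)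
    (hb : b ∉ X) : Even {e | e ∈ w.edges ∧ e ∈ G.cut X}.ncard := by
  classical
  have := walk_parity w X
  simp only [ha, hb, if_false, add_zero] at this
  convert this
  rw [← List.toFinset_card_of_nodup ((edges_nodup w h).filter _), ← Set.ncard_coe_finset]
  congr 1
  ext e; simp

lemma exists_path_to {F : Set E} {Z : Set V} {a z : V} (h : Reach G.inc F a z) (hz : z ∈ Z) :
    ∃ z' ∈ Z, ∃ w : G.Walk a z', w.support.Nodup ∧ (∀ e ∈ w.edges, e ∈ F) ∧
      ∀ x ∈ w.support, x ∈ Z → x = z' := by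
  induction h using Relation.ReflTransGen.head_induction_on with
  | refl => exact ⟨z, hz, .nil z, by simp [Walk.support], by simp [Walk.edges], by simp [Walk.support]⟩
  | @head a b hab _ ih =>
    obtain ⟨z', hz', w, h1, h2, h3⟩ := ih
    obtain ⟨e, he, hi⟩ := hab
    by_cases haZ : a ∈ Z
    · exact ⟨a, haZ, .nil a, by simp [Walk.support], by simp [Walk.edges], by simp [Walk.support]⟩
    by_cases haw : a ∈ w.support
    · obtain ⟨q, q1, q2⟩ := exists_suffix w haw
      exact ⟨z', hz', q, h1.sublist q1.sublist, fun e he => h2 e (q2.subset he),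
        fun x hx => h3 x (q1.subset hx)⟩
    · refine ⟨z', hz', .cons e hi w, by simp [Walk.support, haw, h1], ?_, ?_⟩
      · intro f hf
        simp only [Walk.edges, List.mem_cons] at hf
        rcases hf with rfl | hf
        · exact he
        · exact h2 f hf
      · intro x hx hxZ
        simp only [Walk.support, List.mem_cons] at hx
        rcases hx with rfl | hx
        · exact absurd hxZ haZ
        · exact h3 x hx hxZ

/-- The edge set `F` still satisfies the hypotheses of the theorem. -/
def Valid (G : Multigraph V E) (T : Set V) (s : V) (F : Set E) : Prop :=
  (∀ X : Set V, X ⊆ Tᶜ → ¬ ((cutIn G.inc F X).Finite ∧ Odd (cutIn G.inc F X).ncard)) ∧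
  ∃ Ps : Set (G.TPath T), G.TPathDisjoint Ps ∧ (∀ p ∈ Ps, p.first = s) ∧
    (∀ p ∈ Ps, ∀ e ∈ p.walk.edges, e ∈ F) ∧
    ∀ e ∈ F, e ∈ G.inci s → ∃ p ∈ Ps, e ∈ p.walk.edges

lemma parity_remove {T : Set V} {F : Set E}
    (hF : ∀ X : Set V, X ⊆ Tᶜ → ¬ ((cutIn G.inc F X).Finite ∧ Odd (cutIn G.inc F X).ncard))
    (p : G.TPath T) (hp : ∀ e ∈ p.walk.edges, e ∈ F) (X : Set V) (hX : X ⊆ Tᶜ) :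
    ¬ ((cutIn G.inc (F \ {e | e ∈ p.walk.edges}) X).Finite ∧
      Odd (cutIn G.inc (F \ {e | e ∈ p.walk.edges}) X).ncard) := by
  rintro ⟨h1, h2⟩
  have hpf : {e | e ∈ p.walk.edges ∧ e ∈ G.cut X}.Finite :=
    (List.finite_toSet p.walk.edges).subset fun e he => he.1
  have heq : cutIn G.inc F X = cutIn G.inc (F \ {e | e ∈ p.walk.edges}) X ∪
      {e | e ∈ p.walk.edges ∧ e ∈ G.cut X} := by
    ext e
    constructor
    · rintro ⟨he, hc⟩
      by_cases hep : e ∈ p.walk.edges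
      · exact Or.inr ⟨hep, hc⟩
      · exact Or.inl ⟨⟨he, hep⟩, hc⟩
    · rintro (⟨he, hc⟩ | ⟨he, hc⟩)
      · exact ⟨he.1, hc⟩
      · exact ⟨hp e he, hc⟩
  have hd : Disjoint (cutIn G.inc (F \ {e | e ∈ p.walk.edges}) X)
      {e | e ∈ p.walk.edges ∧ e ∈ G.cut X} := by
    rw [Set.disjoint_left]
    exact fun e he he' => he.1.2 he'.1
  apply hF X hX
  rw [heq]
  refine ⟨h1.union hpf, ?_⟩
  rw [Set.ncard_union_eq hd h1 hpf]
  exact h2.add_even (path_parity p.walk p.support_nodup X (fun h => hX h p.first_mem)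
    (fun h => hX h p.last_mem))

lemma step {T : Set V} {s : V} (hs : s ∈ T)
    (hdeg : ∀ t ∈ T, t ≠ s → (G.inci t).Subsingleton) {F : Set E} (hV : Valid G T s F)
    {e : E} (heF : e ∈ F) {t : V} (ht : t ∈ T) (het : e ∈ G.inci t) :
    ∃ p : G.TPath T, e ∈ p.walk.edges ∧ (∀ f ∈ p.walk.edges, f ∈ F) ∧
      Valid G T s (F \ {f | f ∈ p.walk.edges}) := by
  obtain ⟨hpar, Ps, hdis, hfirst, hsub, hcov⟩ := hV
  by_cases hePs : ∃ p ∈ Ps, e ∈ p.walk.edges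
  · obtain ⟨p, hp, hep⟩ := hePs
    refine ⟨p, hep, hsub p hp, parity_remove hpar p (hsub p hp), Ps \ {p}, ?_, ?_, ?_, ?_⟩
    · exact fun a ha b hb => hdis a ha.1 b hb.1
    · exact fun q hq => hfirst q hq.1
    · intro q hq f hf
      exact ⟨hsub q hq.1 f hf, fun hfp => hdis p hp q hq.1 (Ne.symm hq.2) f hfp hf⟩
    · intro f hf hfs
      obtain ⟨q, hq, hfq⟩ := hcov f hf.1 hfs
      refine ⟨q, ⟨hq, ?_⟩, hfq⟩
      rintro rfl
      exact hf.2 hfq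
  push Not at hePs
  have hts : t ≠ s := by
    rintro rfl
    obtain ⟨p, hp, hep⟩ := hcov e heF het
    exact hePs p hp hep
  have htPs : ∀ p ∈ Ps, t ∉ p.walk.support := by
    intro p hp htp
    rcases p.internal t htp ht with h | h
    · exact hts (h.trans (hfirst p hp))
    · obtain ⟨f, hf, hfl⟩ := exists_last_edge p.walk p.ne
      have : f = e := hdeg t ht hts (by rw [h]; exact hfl) het
      exact hePs p hp (this ▸ hf)
  -- another terminal is reachable
  have hreach : ∃ t' ∈ T, t' ≠ t ∧ Reach G.inc F t t' := by
    by_contra hno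
    push Not at hno
    obtain ⟨y, hy⟩ : ∃ y, G.inc e = s(t, y) := Sym2.mem_iff_exists.1 het
    have hyt : y ≠ t := by
      rintro rfl
      exact G.not_isDiag e (by rw [hy]; simp)
    have hcut : cutIn G.inc F {v | Reach G.inc F t v ∧ v ≠ t} = {e} := by
      ext f
      simp only [Set.mem_singleton_iff]
      constructor
      · rintro ⟨hf, a, b, hi, ⟨ha, hat⟩, hb⟩
        have hbr := reach_closed ha hf hi
        have hbt : b = t := by
          by_contra hbt
          exact hb ⟨hbr, hbt⟩
        subst hbt
        exact hdeg b ht hts (by show b ∈ G.inc f; rw [hi]; simp) het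
      · rintro rfl
        exact ⟨heF, y, t, by rw [hy, Sym2.eq_swap],
          ⟨reach_closed Relation.ReflTransGen.refl heF hy, hyt⟩, fun h => h.2 rfl⟩
    apply hpar {v | Reach G.inc F t v ∧ v ≠ t} (fun v hv hvT => hno v hvT hv.2 hv.1)
    rw [hcut]
    simp
  obtain ⟨t', ht', htt', hr⟩ := hreach
  obtain ⟨z, hz, w, hw1, hw2, hw3⟩ := exists_path_to
    (Z := {v | (v ∈ T ∧ v ≠ t) ∨ ∃ p ∈ Ps, v ∈ p.walk.support}) hr (Or.inl ⟨ht', htt'⟩)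
  have hzt : t ≠ z := by
    rintro rfl
    rcases hz with h | ⟨p, hp, h⟩
    · exact h.2 rfl
    · exact htPs p hp h
  have hew : e ∈ w.edges := by
    obtain ⟨q, q1, q2⟩ := exists_reverse w
    obtain ⟨f, hf, hft⟩ := exists_last_edge q (Ne.symm hzt)
    have : f = e := hdeg t ht hts hft het
    rw [← this]
    simpa [q2] using hf
  have hwPs : ∀ p ∈ Ps, ∀ f ∈ w.edges, f ∉ p.walk.edges := by
    intro p hp f hfw hfp
    have key : ∀ x ∈ G.inc f, x = z := fun x hx =>
      hw3 x (mem_support_of_edge w hfw hx) (Or.inr ⟨p, hp, mem_support_of_edge p.walk hfp hx⟩)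
    have hnd := G.not_isDiag f
    generalize G.inc f = m at key hnd
    induction m with
    | h a b =>
      apply hnd
      rw [Sym2.mk_isDiag_iff, key a (by simp), key b (by simp)]
  by_cases hzT : z ∈ T
  · let P : G.TPath T := ⟨t, z, w, ht, hzT, hzt, hw1, fun x hx hxT => by
      by_cases hxt : x = t
      · exact Or.inl hxt
      · exact Or.inr (hw3 x hx (Or.inl ⟨hxT, hxt⟩))⟩
    refine ⟨P, hew, hw2, parity_remove hpar P hw2, Ps, hdis, hfirst, ?_, ?_⟩
    · exact fun p hp f hf => ⟨hsub p hp f hf, fun hfw => hwPs p hp f hfw hf⟩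
    · exact fun f hf hfs => hcov f hf.1 hfs
  · obtain ⟨p, hp, hzp⟩ : ∃ p ∈ Ps, z ∈ p.walk.support := by
      rcases hz with h | h
      · exact absurd h.1 hzT
      · exact h
    obtain ⟨p1, p2, pw, pf, pl, pne, pnd, pint⟩ := id p
    have hps := hfirst p hp
    obtain ⟨r, hr1, hr2⟩ := exists_reverse p.walk
    have hzr : z ∈ r.support := by rw [hr1]; simpa using hzp
    have hrnd : r.support.Nodup := by rw [hr1]; simpa using p.support_nodup
    obtain ⟨q, hq1, hq2⟩ := exists_suffix r hzr
    have hqnd : q.support.Nodup := hrnd.sublist hq1.sublist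
    have hqp : ∀ x ∈ q.support, x ∈ p.walk.support := fun x hx => by
      have := hq1.subset hx
      rw [hr1] at this
      simpa using this
    have hqpe : ∀ f ∈ q.edges, f ∈ p.walk.edges := fun x hx => by
      have := hq2.subset hx
      rw [hr2] at this
      simpa using this
    have hlast : p.last ∉ q.support := by
      intro hl
      obtain ⟨l, hl1⟩ := support_eq r
      obtain ⟨l', hl2⟩ := support_eq q
      rw [hl1] at hq1 hrnd
      rcases List.suffix_cons_iff.1 hq1 with h | h
      · rw [hl2] at h
        have := (List.cons.inj h).1
        exact hzT (this ▸ p.last_mem)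
      · exact (List.nodup_cons.1 hrnd).1 (h.subset hl)
    obtain ⟨m, hm1, hm2⟩ := exists_append w q
    have hzs : z ≠ p.first := fun h => hzT (h ▸ p.first_mem)
    have hqt : ∀ x ∈ q.support.tail, x ∈ q.support := fun x hx => List.mem_of_mem_tail hx
    let P : G.TPath T := ⟨t, p.first, m, ht, p.first_mem, by rw [hps]; exact hts, by
        rw [hm1, List.nodup_append']
        refine ⟨hw1, hqnd.sublist (List.tail_sublist _), ?_⟩
        intro x hx hxq
        have hxz := hw3 x hx (Or.inr ⟨p, hp, hqp x (hqt x hxq)⟩)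
        obtain ⟨l', hl2⟩ := support_eq q
        rw [hl2] at hxq hqnd
        exact (List.nodup_cons.1 hqnd).1 (hxz ▸ hxq), by
        intro x hx hxT
        rw [hm1, List.mem_append] at hx
        rcases hx with hx | hx
        · by_cases hxt : x = t
          · exact Or.inl hxt
          · exact absurd (hw3 x hx (Or.inl ⟨hxT, hxt⟩) ▸ hxT) hzT
        · rcases p.internal x (hqp x (hqt x hx)) hxT with h | h
          · exact Or.inr h
          · exact absurd (h ▸ hqt x hx) hlast⟩
    have hPe : ∀ f, f ∈ P.walk.edges ↔ f ∈ w.edges ∨ f ∈ q.edges := by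
      intro f
      show f ∈ m.edges ↔ _
      rw [hm2, List.mem_append]
    have hPF : ∀ f ∈ P.walk.edges, f ∈ F := by
      intro f hf
      rcases (hPe f).1 hf with h | h
      · exact hw2 f h
      · exact hsub p hp f (hqpe f h)
    refine ⟨P, (hPe e).2 (Or.inl hew), hPF, parity_remove hpar P hPF, Ps \ {p}, ?_, ?_, ?_, ?_⟩
    · exact fun a ha b hb => hdis a ha.1 b hb.1
    · exact fun q hq => hfirst q hq.1
    · intro p' hp' f hf
      refine ⟨hsub p' hp'.1 f hf, fun hfP => ?_⟩
      rcases (hPe f).1 hfP with h | h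
      · exact hwPs p' hp'.1 f h hf
      · exact hdis p hp p' hp'.1 (Ne.symm hp'.2) f (hqpe f h) hf
    · intro f hf hfs
      obtain ⟨p', hp', hfp'⟩ := hcov f hf.1 hfs
      refine ⟨p', ⟨hp', ?_⟩, hfp'⟩
      rintro rfl
      obtain ⟨f', hf', hfs'⟩ := exists_last_edge q hzs
      have : f = f' := first_edge_unique p'.walk p'.support_nodup hfp' (hqpe f' hf')
        (by rw [hps]; exact hfs) hfs'
      exact hf.2 ((hPe f).2 (Or.inr (this ▸ hf')))

lemma countable_case {T : Set V} {s : V} (hs : s ∈ T)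
    (hdeg : ∀ t ∈ T, t ≠ s → (G.inci t).Subsingleton) {F : Set E} (hc : F.Countable)
    (hV : Valid G T s F) :
    ∃ P : Set (G.TPath T), G.TPathDisjoint P ∧ (∀ p ∈ P, ∀ e ∈ p.walk.edges, e ∈ F) ∧
      ∀ t ∈ T, ∀ e ∈ F, e ∈ G.inci t → ∃ p ∈ P, e ∈ p.walk.edges := by
  classical
  by_cases hne : F.Nonempty
  swap
  · refine ⟨∅, fun p hp => absurd hp (by simp), by simp, ?_⟩
    intro t _ e he
    exact absurd ⟨e, he⟩ hne
  obtain ⟨en, hen⟩ := hc.exists_eq_range hne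
  -- one step, as a total operation on valid sets
  have hst : ∀ (S : {S : Set E // Valid G T s S}) (e : E), ∃ (S' : {S : Set E // Valid G T s S})
      (A : Set E), S'.1 = S.1 \ A ∧ A ⊆ S.1 ∧
      (A = ∅ ∨ ∃ p : G.TPath T, A = {f | f ∈ p.walk.edges}) ∧
      (e ∈ S.1 → (∃ t ∈ T, e ∈ G.inci t) → e ∈ A) := by
    intro S e
    by_cases h : e ∈ S.1 ∧ ∃ t ∈ T, e ∈ G.inci t
    · obtain ⟨he, t, ht, het⟩ := h
      obtain ⟨p, h1, h2, h3⟩ := step hs hdeg S.2 he ht het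
      exact ⟨⟨_, h3⟩, {f | f ∈ p.walk.edges}, rfl, h2, Or.inr ⟨p, rfl⟩, fun _ _ => h1⟩
    · exact ⟨S, ∅, by simp, by simp, Or.inl rfl, fun h1 h2 => absurd ⟨h1, h2⟩ h⟩
  choose nx A hA1 hA2 hA3 hA4 using hst
  obtain ⟨S, hS0, hSn⟩ : ∃ S : ℕ → {S : Set E // Valid G T s S}, S 0 = ⟨F, hV⟩ ∧
      ∀ n, S (n+1) = nx (S n) (en n) :=
    ⟨fun n => Nat.rec ⟨F, hV⟩ (fun n S => nx S (en n)) n, rfl, fun n => rfl⟩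
  let a : ℕ → Set E := fun n => A (S n) (en n)
  have hsucc : ∀ n, (S (n+1)).1 = (S n).1 \ a n := fun n => by rw [hSn, hA1]
  have hanti : Antitone fun n => (S n).1 := antitone_nat_of_succ_le fun n => by
    show (S (n+1)).1 ⊆ (S n).1
    rw [hsucc]; exact Set.sdiff_subset
  have hdj : ∀ m n, m < n → Disjoint (a m) (a n) := by
    intro m n hmn
    rw [Set.disjoint_left]
    intro f hf hf'
    have h1 : f ∈ (S (m+1)).1 := hanti (Nat.succ_le_of_lt hmn) (hA2 _ _ hf')
    rw [hsucc] at h1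
    exact h1.2 hf
  have hdj' : ∀ m n, m ≠ n → Disjoint (a m) (a n) := fun m n h =>
    h.lt_or_gt.elim (hdj m n) fun h => (hdj n m h).symm
  have hSF : ∀ n, (S n).1 ⊆ F := fun n => by
    have : (S n).1 ⊆ (S 0).1 := hanti (Nat.zero_le n)
    rw [hS0] at this
    exact this
  have hpn : ∀ n, ∃ p : Option (G.TPath T), (p = none → a n = ∅) ∧
      ∀ q, p = some q → a n = {f | f ∈ q.walk.edges} := by
    intro n
    rcases hA3 (S n) (en n) with h | ⟨p, hp⟩
    · exact ⟨none, fun _ => h, by simp⟩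
    · refine ⟨some p, by simp, ?_⟩
      rintro q hq
      cases hq
      exact hp
  choose pn hpn1 hpn2 using hpn
  refine ⟨{p | ∃ n, pn n = some p}, ?_, ?_, ?_⟩
  · rintro p ⟨m, hm⟩ q ⟨n, hn⟩ hpq f hf hf'
    have hmn : m ≠ n := by
      rintro rfl
      rw [hm] at hn
      exact hpq (Option.some.inj hn)
    have h1 : f ∈ a m := by rw [hpn2 m p hm]; exact hf
    have h2 : f ∈ a n := by rw [hpn2 n q hn]; exact hf'
    exact Set.disjoint_left.1 (hdj' m n hmn) h1 h2
  · rintro p ⟨n, hn⟩ f hf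
    have h1 : f ∈ a n := by rw [hpn2 n p hn]; exact hf
    exact hSF n (hA2 _ _ h1)
  · intro t ht f hf hft
    have hfa : ∃ n, f ∈ a n := by
      rw [hen] at hf
      obtain ⟨n, rfl⟩ := hf
      have hor : ∀ k, en n ∈ (S k).1 ∨ ∃ m, en n ∈ a m := by
        intro k
        induction k with
        | zero => left; rw [hS0]; exact hen.ge ⟨n, rfl⟩
        | succ k ih =>
          rcases ih with h | h
          · by_cases h' : en n ∈ a k
            · exact Or.inr ⟨k, h'⟩
            · left; rw [hsucc]; exact ⟨h, h'⟩
          · exact Or.inr h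
      rcases hor n with h | h
      · exact ⟨n, hA4 (S n) (en n) h ⟨t, ht, hft⟩⟩
      · exact h
    obtain ⟨n, hn⟩ := hfa
    cases hp : pn n with
    | none => rw [hpn1 n hp] at hn; exact absurd hn (by simp)
    | some p =>
      rw [hpn2 n p hp] at hn
      exact ⟨p, ⟨n, hp⟩, hn⟩

end LCaux

/-- If some `s ∈ T` satisfies `d(t) ≤ 1` for every `t ∈ T − s`, no
`X ⊆ V ∖ T` has odd finite cut, and there is a system of pairwise edge-disjoint
paths between `s` and `T − s` covering `δ(s)`, then there is a system of
pairwise edge-disjoint `T`-paths covering `⋃_{t ∈ T} δ(t)`. -/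
theorem special_case_linked {V : Type u} {E : Type v} (G : Multigraph V E)
    (T : Set V) (s : V) (hs : s ∈ T)
    (hdeg : ∀ t ∈ T, t ≠ s → (G.inci t).Subsingleton)
    (hEul : ∀ X : Set V, X ⊆ Tᶜ → ¬ ((G.cut X).Finite ∧ Odd (G.cut X).ncard))
    (hPs : ∃ Ps : Set (G.TPath T), G.TPathDisjoint Ps ∧ (∀ p ∈ Ps, p.first = s) ∧
      ∀ e ∈ G.inci s, ∃ p ∈ Ps, e ∈ p.walk.edges) :
    ∃ P : Set (G.TPath T), G.TPathDisjoint P ∧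
      ∀ t ∈ T, ∀ e ∈ G.inci t, ∃ p ∈ P, e ∈ p.walk.edges := by
  classical
  obtain ⟨Ps, hdis, hfirst, hcov⟩ := hPs
  -- contract `T` to the vertex `s`
  let q : V → V := fun v => if v ∈ T then s else v
  have hqT : ∀ v ∈ T, q v = s := fun v hv => by simp [q, hv]
  have hqn : ∀ v, v ∉ T → q v = v := fun v hv => by simp [q, hv]
  have hq : ∀ (F : Set E) (X : Set V), LCaux.cutIn (fun e => Sym2.map q (G.inc e)) F X =
      LCaux.cutIn G.inc F (q ⁻¹' X) := by
    intro F X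
    ext e
    constructor
    · rintro ⟨he, x, y, hi, hx, hy⟩
      refine ⟨he, ?_⟩
      dsimp only at hi
      generalize G.inc e = m at hi
      induction m with
      | h a b =>
        rw [Sym2.map_mk, Sym2.eq_iff] at hi
        rcases hi with ⟨h1, h2⟩ | ⟨h1, h2⟩
        · exact ⟨a, b, rfl, by simpa [h1] using hx, by simpa [h2] using hy⟩
        · exact ⟨b, a, Sym2.eq_swap, by simpa [h2] using hx, by simpa [h1] using hy⟩
    · rintro ⟨he, x, y, hi, hx, hy⟩
      exact ⟨he, q x, q y, by simp [hi], hx, hy⟩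
  have hno : LCaux.NoOdd (fun e => Sym2.map q (G.inc e)) Set.univ := by
    intro X
    rw [hq]
    by_cases hsX : s ∈ X
    · have h1 : LCaux.cutIn G.inc Set.univ (q ⁻¹' X) = G.cut (q ⁻¹' X)ᶜ := by
        ext e
        constructor
        · rintro ⟨-, x, y, hi, hx, hy⟩
          exact ⟨y, x, by rw [hi, Sym2.eq_swap], hy, fun h => h hx⟩
        · rintro ⟨x, y, hi, hx, hy⟩
          exact ⟨trivial, y, x, by rw [hi, Sym2.eq_swap], not_not.1 hy, hx⟩
      rw [h1]
      refine hEul _ fun v hv hvT => hv ?_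
      show q v ∈ X
      rw [hqT v hvT]; exact hsX
    · have h1 : LCaux.cutIn G.inc Set.univ (q ⁻¹' X) = G.cut (q ⁻¹' X) := by
        ext e
        exact ⟨fun h => h.2, fun h => ⟨trivial, h⟩⟩
      rw [h1]
      refine hEul _ fun v hv hvT => hsX ?_
      have : q v ∈ X := hv
      rwa [hqT v hvT] at this
  let pp : E → Set E := fun e => {f | ∃ p ∈ Ps, e ∈ p.walk.edges ∧ f ∈ p.walk.edges}
  have hppc : ∀ e, (pp e).Countable := by
    intro e
    by_cases h : ∃ p ∈ Ps, e ∈ p.walk.edges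
    · obtain ⟨p, hp, hep⟩ := h
      refine (List.finite_toSet p.walk.edges).countable.mono ?_
      rintro f ⟨p', hp', hep', hf⟩
      have : p' = p := by
        by_contra hne
        exact hdis p' hp' p hp hne e hep' hep
      subst this
      exact hf
    · refine Set.countable_empty.mono ?_
      rintro f ⟨p, hp, hep, -⟩
      exact h ⟨p, hp, hep⟩
  obtain ⟨D, hD1, hD2, hD3⟩ := LCaux.decomp (fun e => Sym2.map q (G.inc e)) pp hppc
    (fun e f ⟨p, hp, h1, h2⟩ => ⟨p, hp, h2, h1⟩) _ Set.univ rfl hno (fun _ _ => Set.subset_univ _)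
  have hval : ∀ d : D, LCaux.Valid G T s d.1 := by
    rintro ⟨d, hd⟩
    obtain ⟨-, -, h3, h4⟩ := hD1 d hd
    refine ⟨fun X hX => ?_, {p | p ∈ Ps ∧ ∀ e ∈ p.walk.edges, e ∈ d}, ?_, ?_, ?_, ?_⟩
    · have hXq : q ⁻¹' X = X := by
        ext v
        by_cases hv : v ∈ T
        · simp only [Set.mem_preimage, hqT v hv]
          exact ⟨fun h => absurd hs (hX h), fun h => absurd hv (hX h)⟩
        · simp only [Set.mem_preimage, hqn v hv]
      have := h3 X
      rwa [hq, hXq] at this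
    · exact fun a ha b hb => hdis a ha.1 b hb.1
    · exact fun p hp => hfirst p hp.1
    · exact fun p hp => hp.2
    · intro e he hes
      obtain ⟨p, hp, hep⟩ := hcov e hes
      exact ⟨p, ⟨hp, fun f hf => h4 e he ⟨p, hp, hep, hf⟩⟩, hep⟩
  choose P hP1 hP2 hP3 using fun d : D =>
    LCaux.countable_case hs hdeg (hD1 d.1 d.2).2.1 (hval d)
  refine ⟨⋃ d, P d, ?_, ?_⟩
  · intro p hp p' hp' hne e he he'
    obtain ⟨d, hd⟩ := Set.mem_iUnion.1 hp
    obtain ⟨d', hd'⟩ := Set.mem_iUnion.1 hp'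
    by_cases hdd : d = d'
    · subst hdd
      exact hP1 d p hd p' hd' hne e he he'
    · exact Set.disjoint_left.1 (hD2 d.2 d'.2 (fun h => hdd (Subtype.ext h)))
        (hP2 d p hd e he) (hP2 d' p' hd' e he')
  · intro t ht e he
    have : e ∈ ⋃₀ D := by rw [hD3]; trivial
    obtain ⟨d, hd, hed⟩ := this
    obtain ⟨p, hp, hep⟩ := hP3 ⟨d, hd⟩ t ht e hed he
    exact ⟨p, Set.mem_iUnion.2 ⟨_, hp⟩, hep⟩
end

section
/- Let H be a (possibly infinite) graph, let s, t ∈ V(H) be distinct, suppose there is a system 𝒫 of pairwise edge-disjoint st-paths in H covering δ_H(s), and suppose there is an edge e ∈ E(H)∖δ_H(s) that is used by every system of pairwise edge-disjoint st-paths covering δ_H(s). Then there exists an s-tight Erdős–Menger st-cut C containing e. -/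
/-!
Common definitions: multigraphs (parallel edges allowed, no loops), walks,
paths, cuts, waves and related notions used in the statements below.
-/

universe u v

namespace TightCut

/-- Two splittings of a list at the last element of `K` agree. -/
lemma split_last {α : Type*} {K : Set α} {m1 m2 n1 n2 : List α} {x y : α}
    (h : m1 ++ x :: m2 = n1 ++ y :: n2) (hx : x ∈ K) (hy : y ∈ K)
    (hm : ∀ z ∈ m2, z ∉ K) (hn : ∀ z ∈ n2, z ∉ K) : x = y := by
  rw [List.append_eq_append_iff] at h
  rcases h with ⟨c, h1, h2⟩ | ⟨c, h1, h2⟩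
  · cases c with
    | nil => simp at h2; exact h2.1
    | cons d c =>
      simp at h2
      exact absurd hy (hm y (by rw [h2.2]; simp))
  · cases c with
    | nil => simp at h2; exact h2.1.symm
    | cons d c =>
      simp at h2
      exact absurd hx (hn x (by rw [h2.2]; simp))

lemma split_last_occ {α : Type*} {l : List α} {x : α} (h : x ∈ l) :
    ∃ l1 l2, l = l1 ++ x :: l2 ∧ x ∉ l2 := by
  induction l with
  | nil => simp at h
  | cons a l ih =>
    by_cases hx : x ∈ l
    · obtain ⟨l1, l2, h1, h2⟩ := ih hx
      exact ⟨a :: l1, l2, by simp [h1], h2⟩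
    · have : x = a := by simpa [hx] using h
      exact ⟨[], l, by simp [this], hx⟩

lemma first_exit {α : Type*} {K : Set α} (l : List α) (a : α) (ha : a ∈ K) :
    ∃ l1 g l2, a :: l = l1 ++ g :: l2 ∧ (∀ x ∈ l1, x ∈ K) ∧ g ∈ K ∧
      (∀ g' l3, l2 = g' :: l3 → g' ∉ K) := by
  induction l generalizing a with
  | nil => exact ⟨[], a, [], by simp, by simp, ha, by simp⟩
  | cons b l ih =>
    by_cases hb : b ∈ K
    · obtain ⟨l1, g, l2, h1, h2, h3, h4⟩ := ih b hb
      refine ⟨a :: l1, g, l2, by simp [h1], ?_, h3, h4⟩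
      intro x hx
      rcases List.mem_cons.1 hx with rfl | hx
      · exact ha
      · exact h2 x hx
    · refine ⟨[], a, b :: l, by simp, by simp, ha, ?_⟩
      intro g' l3 h
      simp at h
      rw [← h.1]; exact hb

/-- Abstract exchange lemma (a one-sided version of the linkage theorem). -/
theorem exchange {α I : Type*} (hd : I → α) (i0 : I) (L Q : I → List α)
    (hL : ∀ i, ∃ l, L i = hd i :: l)
    (hQ : ∀ i, i ≠ i0 → ∃ l, Q i = hd i :: l ∧ ∀ j, hd j ∉ l)
    (hLn : ∀ i, (L i).Nodup) (hQn : ∀ i, i ≠ i0 → (Q i).Nodup)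
    (hLd : ∀ i j x, x ∈ L i → x ∈ L j → i = j)
    (hQd : ∀ i j x, i ≠ i0 → j ≠ i0 → x ∈ Q i → x ∈ Q j → i = j) :
    ∃ (r : I → List α) (B : Set I), B.Subsingleton ∧
      (∀ i j x, x ∈ r i → x ∈ r j → i = j) ∧
      (∀ i, (r i).Nodup) ∧
      (∀ i ∈ B, r i = L i) ∧
      (∀ i, i ∉ B → ∃ j, j ≠ i0 ∧ ∃ l1 g l2 m1 m2, L i = l1 ++ g :: l2 ∧
        Q j = m1 ++ g :: m2 ∧ r i = l1 ++ g :: m2) := by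
  classical
  let held : Set α → α → Prop := fun K g =>
    ∃ j, j ≠ i0 ∧ ∃ m1 m2, Q j = m1 ++ g :: m2 ∧ ∀ x ∈ m2, x ∉ K
  let adv : Set α → α → Prop := fun K g =>
    ∃ i l1 g' l2, L i = l1 ++ g :: g' :: l2 ∧ g' ∈ K
  let bad : Set α → α → Prop := fun K g => g ∈ K ∧ ¬ held K g ∧ ¬ adv K g
  let S : Set (Set α) := {K | Set.range hd ⊆ K ∧ ∀ x y, bad K x → bad K y → x = y}
  have hbase : Set.range hd ∈ S := by
    refine ⟨subset_rfl, ?_⟩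
    have key : ∀ x, bad (Set.range hd) x → x = hd i0 := by
      rintro x ⟨⟨i, rfl⟩, h2, -⟩
      by_contra hne
      have hi : i ≠ i0 := fun h => hne (by rw [h])
      obtain ⟨l, h3, h4⟩ := hQ i hi
      apply h2
      refine ⟨i, hi, [], l, by simpa using h3, ?_⟩
      rintro x hx ⟨j, rfl⟩
      exact h4 j hx
    intro x y hx hy
    rw [key x hx, key y hy]
  have hchain : ∀ c ⊆ S, IsChain (· ⊆ ·) c → c.Nonempty → ∃ ub ∈ S, ∀ s ∈ c, s ⊆ ub := by
    intro c hc hch hne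
    refine ⟨⋃₀ c, ⟨?_, ?_⟩, fun s hs => Set.subset_sUnion_of_mem hs⟩
    · obtain ⟨K, hK⟩ := hne
      exact (hc hK).1.trans (Set.subset_sUnion_of_mem hK)
    · intro x y hx hy
      by_contra hxy
      -- some member in which `x` is not held, and likewise for `y`
      have key : ∀ x, bad (⋃₀ c) x → ∃ K ∈ c, ∀ K' ∈ c, K ⊆ K' → bad K' x := by
        rintro x ⟨⟨K0, hK0, hx0⟩, h2, h3⟩
        have hadv : ∀ K ∈ c, ¬ adv K x := by
          rintro K hK ⟨i, l1, g', l2, h4, h5⟩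
          exact h3 ⟨i, l1, g', l2, h4, K, hK, h5⟩
        by_cases hq : ∃ j, j ≠ i0 ∧ x ∈ Q j
        · obtain ⟨j, hj, hxj⟩ := hq
          obtain ⟨m1, m2, h4, h5⟩ := split_last_occ hxj
          have : ∃ z ∈ m2, z ∈ ⋃₀ c := by
            by_contra hcon
            push Not at hcon
            exact h2 ⟨j, hj, m1, m2, h4, hcon⟩
          obtain ⟨z, hz, K1, hK1, hzK⟩ := this
          have hnh : ∀ K', K1 ⊆ K' → x ∈ K' → ¬ held K' x := by
            rintro K' hsub hxK' ⟨j', hj', n1, n2, h6, h7⟩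
            have : j' = j := hQd j' j x hj' hj (by rw [h6]; simp) hxj
            subst this
            -- compare the two splittings
            rw [h4, List.append_eq_append_iff] at h6
            rcases h6 with ⟨d, e1, e2⟩ | ⟨d, e1, e2⟩
            · cases d with
              | nil => 
                simp at e2
                exact h7 z (by rw [← e2]; exact hz) (hsub hzK)
              | cons w d =>
                simp at e2
                exact h5 (by rw [e2.2]; simp)
            · cases d with
              | nil => 
                simp at e2
                exact h7 z (by rw [e2]; exact hz) (hsub hzK)
              | cons w d =>
                simp at e2
                exact h7 x (by rw [e2.2]; simp) hxK'
          rcases hch.total hK0 hK1 with h | h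
          · exact ⟨K1, hK1, fun K' hK' hs => ⟨hs (h hx0), hnh K' hs (hs (h hx0)), hadv K' hK'⟩⟩
          · exact ⟨K0, hK0, fun K' hK' hs => ⟨hs hx0, hnh K' (h.trans hs) (hs hx0), hadv K' hK'⟩⟩
        · refine ⟨K0, hK0, fun K' hK' hs => ⟨hs hx0, ?_, hadv K' hK'⟩⟩
          rintro ⟨j, hj, m1, m2, h4, -⟩
          exact hq ⟨j, hj, by rw [h4]; simp⟩
      obtain ⟨K1, hK1, h1⟩ := key x hx
      obtain ⟨K2, hK2, h2⟩ := key y hy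
      rcases hch.total hK1 hK2 with h | h
      · exact hxy ((hc hK2).2 x y (h1 K2 hK2 h) (h2 K2 hK2 subset_rfl))
      · exact hxy ((hc hK1).2 x y (h1 K1 hK1 subset_rfl) (h2 K1 hK1 h))
  obtain ⟨K, -, hKmax⟩ := zorn_subset_nonempty S hchain _ hbase
  have hKS : K ∈ S := hKmax.prop
  -- a bad element of the maximal `K` has no successor
  have hfinal : ∀ i l1 h g l2, L i = l1 ++ h :: g :: l2 → bad K h → False := by
    intro i l1 h g l2 hLi hbad
    have hgK : g ∉ K := fun hg => hbad.2.2 ⟨i, l1, g, l2, hLi, hg⟩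
    have hins : insert g K ∈ S := by
      refine ⟨hKS.1.trans (Set.subset_insert _ _), ?_⟩
      have hmono : ∀ x, adv K x → adv (insert g K) x := by
        rintro x ⟨i, l1, g', l2, h4, h5⟩
        exact ⟨i, l1, g', l2, h4, Or.inr h5⟩
      have key : ∀ x, bad (insert g K) x → x ≠ g → x ∈ K ∧ ∃ j, j ≠ i0 ∧ ∃ m1 m2,
          Q j = m1 ++ x :: m2 ∧ (∀ z ∈ m2, z ∉ K) ∧ g ∈ m2 := by
        rintro x ⟨h1, h2, h3⟩ hxg
        have hxK : x ∈ K := by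
          rcases h1 with h1 | h1
          · exact absurd h1 hxg
          · exact h1
        refine ⟨hxK, ?_⟩
        have hxh : x ≠ h := by
          rintro rfl
          exact h3 ⟨i, l1, g, l2, hLi, Or.inl rfl⟩
        have hheld : held K x := by
          by_contra hcon
          exact hxh (hKS.2 x h ⟨hxK, hcon, fun ha => h3 (hmono x ha)⟩ hbad)
        obtain ⟨j, hj, m1, m2, h4, h5⟩ := hheld
        refine ⟨j, hj, m1, m2, h4, h5, ?_⟩
        by_contra hg
        apply h2
        refine ⟨j, hj, m1, m2, h4, ?_⟩
        rintro z hz (rfl | hzK)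
        · exact hg hz
        · exact h5 z hz hzK
      have key2 : ∀ x, bad (insert g K) x → x ≠ g → held (insert g K) g := by
        intro x hx hxg
        obtain ⟨-, j, hj, m1, m2, h4, h5, h6⟩ := key x hx hxg
        obtain ⟨n1, n2, h7, h8⟩ := split_last_occ h6
        refine ⟨j, hj, m1 ++ x :: n1, n2, by rw [h4, h7]; simp, ?_⟩
        rintro z hz (rfl | hzK)
        · exact h8 hz
        · exact h5 z (by rw [h7]; simp [hz]) hzK
      intro x y hx hy
      by_cases hxg : x = g
      · by_cases hyg : y = g
        · rw [hxg, hyg]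
        · exact absurd (key2 y hy hyg) (hxg ▸ hx.2.1)
      · by_cases hyg : y = g
        · exact absurd (key2 x hx hxg) (hyg ▸ hy.2.1)
        · obtain ⟨hxK, j, hj, m1, m2, h4, h5, h6⟩ := key x hx hxg
          obtain ⟨hyK, j', hj', n1, n2, h4', h5', h6'⟩ := key y hy hyg
          have : j = j' := hQd j j' g hj hj' (by rw [h4]; simp [h6]) (by rw [h4']; simp [h6'])
          subst this
          exact split_last (h4.symm.trans h4') hxK hyK h5 h5'
    exact hgK (hKmax.le_of_ge hins (Set.subset_insert _ _) (Set.mem_insert _ _))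
  -- build the new family
  have hfirst : ∀ i, ∃ l1 g l2, L i = l1 ++ g :: l2 ∧ (∀ x ∈ l1, x ∈ K) ∧ g ∈ K ∧
      (∀ g' l3, l2 = g' :: l3 → g' ∉ K) := by
    intro i
    obtain ⟨l, hl⟩ := hL i
    rw [hl]
    exact first_exit l _ (hKS.1 ⟨i, rfl⟩)
  choose l1 g l2 hs1 hs2 hs3 hs4 using hfirst
  have hnadv : ∀ i, ¬ adv K (g i) := by
    rintro i ⟨i', n1, g', n2, h1, h2⟩
    have : i' = i := hLd i' i (g i) (by rw [h1]; simp) (by rw [hs1 i]; simp)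
    subst this
    have hn := hLn i'
    have h3 := hs1 i'
    rw [h1] at hn
    rw [h1, List.append_eq_append_iff] at h3
    rcases h3 with ⟨d, e1, e2⟩ | ⟨d, e1, e2⟩
    · cases d with
      | nil => 
        simp at e2
        exact hs4 i' g' n2 e2.symm h2
      | cons w d =>
        simp only [List.cons_append, List.cons.injEq] at e2
        rw [e2.2] at hn
        simp [List.nodup_append] at hn
    · cases d with
      | nil => 
        simp at e2
        exact hs4 i' g' n2 e2 h2
      | cons w d =>
        simp only [List.cons_append, List.cons.injEq] at e2
        rw [e1, ← e2.1] at hn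
        simp [List.nodup_append] at hn
  let B : Set I := {i | ¬ held K (g i)}
  have hBbad : ∀ i ∈ B, bad K (g i) := fun i hi => ⟨hs3 i, hi, hnadv i⟩
  have hBL : ∀ i ∈ B, L i = l1 i ++ [g i] := by
    intro i hi
    have h := hs1 i
    cases hc : l2 i with
    | nil => rw [hc] at h; exact h
    | cons a l => rw [hc] at h; exact (hfinal i _ _ _ _ h (hBbad i hi)).elim
  have hex : ∀ i, ∃ j m1 m2, i ∉ B → (j ≠ i0 ∧ Q j = m1 ++ g i :: m2 ∧ ∀ x ∈ m2, x ∉ K) := by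
    intro i
    by_cases hi : held K (g i)
    · obtain ⟨j, hj, m1, m2, h⟩ := hi
      exact ⟨j, m1, m2, fun _ => ⟨hj, h⟩⟩
    · exact ⟨i0, [], [], fun h => (h hi).elim⟩
  choose J m1 m2 hJ using hex
  let r : I → List α := fun i => if i ∈ B then L i else l1 i ++ g i :: m2 i
  have hr : ∀ i x, x ∈ r i → (x ∈ K ∧ x ∈ L i) ∨
      (x ∉ K ∧ J i ≠ i0 ∧ Q (J i) = m1 i ++ g i :: m2 i ∧ (∀ x ∈ m2 i, x ∉ K) ∧ x ∈ m2 i) := by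
    intro i x hx
    by_cases hi : i ∈ B
    · left
      have : x ∈ L i := by simpa [r, hi] using hx
      refine ⟨?_, this⟩
      rw [hBL i hi] at this
      simp at this
      rcases this with h | rfl
      · exact hs2 i x h
      · exact hs3 i
    · have hx' : x ∈ l1 i ++ g i :: m2 i := by simpa only [r, hi, if_false] using hx
      simp only [List.mem_append, List.mem_cons] at hx'
      rcases hx' with h | rfl | h
      · exact Or.inl ⟨hs2 i x h, by rw [hs1 i]; simp [h]⟩
      · exact Or.inl ⟨hs3 i, by rw [hs1 i]; simp⟩
      · obtain ⟨h1, h2, h3⟩ := hJ i hi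
        exact Or.inr ⟨h3 x h, h1, h2, h3, h⟩
  refine ⟨r, B, ?_, ?_, ?_, ?_, ?_⟩
  · intro i hi j hj
    have := hKS.2 _ _ (hBbad i hi) (hBbad j hj)
    exact hLd i j (g i) (by rw [hs1 i]; simp) (by rw [this, hs1 j]; simp)
  · intro i j x hi hj
    rcases hr i x hi with ⟨a1, a2⟩ | ⟨a1, a2, a3, a4, a5⟩
    · rcases hr j x hj with ⟨b1, b2⟩ | ⟨b1, b2, b3, b4, b5⟩
      · exact hLd i j x a2 b2
      · exact absurd a1 b1
    · rcases hr j x hj with ⟨b1, b2⟩ | ⟨b1, b2, b3, b4, b5⟩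
      · exact absurd b1 a1
      · have hjj : J i = J j :=
          hQd _ _ x a2 b2 (by rw [a3]; simp [a5]) (by rw [b3]; simp [b5])
        rw [hjj] at a3
        have := split_last (a3.symm.trans b3) (hs3 i) (hs3 j) a4 b4
        exact hLd i j (g i) (by rw [hs1 i]; simp) (by rw [this, hs1 j]; simp)
  · intro i
    by_cases hi : i ∈ B
    · simpa [r, hi] using hLn i
    · obtain ⟨h1, h2, h3⟩ := hJ i hi
      have hn := hQn _ h1
      have hn' := hLn i
      rw [h2] at hn
      rw [hs1 i] at hn'
      have e1 : r i = (l1 i ++ [g i]) ++ m2 i := by simp [r, hi]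
      have e2 : l1 i ++ g i :: l2 i = (l1 i ++ [g i]) ++ l2 i := by simp
      have e3 : m1 i ++ g i :: m2 i = (m1 i ++ [g i]) ++ m2 i := by simp
      rw [e2] at hn'
      rw [e3] at hn
      rw [e1]
      refine List.Nodup.append hn'.of_append_left hn.of_append_right ?_
      intro x hx hx'
      apply h3 x hx'
      simp only [List.mem_append, List.mem_singleton] at hx
      rcases hx with h | rfl
      · exact hs2 i x h
      · exact hs3 i
  · intro i hi
    simp [r, hi]
  · intro i hi
    obtain ⟨h1, h2, h3⟩ := hJ i hi
    exact ⟨J i, h1, l1 i, g i, l2 i, m1 i, m2 i, hs1 i, h2, by simp [r, hi]⟩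

end TightCut

namespace TightCut

open Multigraph

variable {V : Type u} {E : Type v}

/-- `Tr H a l b`: the list of edges `l` is traversed by a walk from `a` to `b`. -/
def Tr (H : Multigraph V E) : V → List E → V → Prop
  | a, [], b => a = b
  | a, e :: l, b => ∃ c, H.inc e = s(a, c) ∧ Tr H c l b

variable {H : Multigraph V E}

lemma tr_append {a b : V} {l m : List E} :
    Tr H a (l ++ m) b ↔ ∃ c, Tr H a l c ∧ Tr H c m b := by
  induction l generalizing a with
  | nil => simp [Tr]
  | cons e l ih =>
    simp only [List.cons_append, Tr, ih]
    constructor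
    · rintro ⟨c, h, d, h1, h2⟩
      exact ⟨d, ⟨c, h, h1⟩, h2⟩
    · rintro ⟨d, ⟨c, h, h1⟩, h2⟩
      exact ⟨c, h, d, h1, h2⟩

lemma tr_split {a b : V} {l m : List E} {g : E} :
    Tr H a (l ++ g :: m) b ↔ ∃ x y, Tr H a l x ∧ H.inc g = s(x, y) ∧ Tr H y m b := by
  rw [tr_append]
  constructor
  · rintro ⟨x, h, y, h1, h2⟩
    exact ⟨x, y, h, h1, h2⟩
  · rintro ⟨x, y, h, h1, h2⟩
    exact ⟨x, h, y, h1, h2⟩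

lemma inc_right {g : E} {x y z : V} (h : H.inc g = s(x, y)) (h' : H.inc g = s(x, z)) : y = z := by
  rw [h, Sym2.eq_iff] at h'
  rcases h' with h' | h'
  · exact h'.2
  · exact h'.2.trans h'.1

lemma inc_ne {g : E} {x y : V} (h : H.inc g = s(x, y)) : x ≠ y := by
  have := H.not_isDiag g
  rw [h] at this
  simpa using this

lemma tr_unique {a b c : V} {l : List E} (h : Tr H a l b) (h' : Tr H a l c) : b = c := by
  induction l generalizing a with
  | nil => exact h.symm.trans h'
  | cons e l ih =>
    obtain ⟨x, h1, h2⟩ := h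
    obtain ⟨y, h3, h4⟩ := h'
    rw [inc_right h3 h1] at h4
    exact ih h2 h4

lemma tr_cross {a b : V} {l : List E} {X : Set V} (h : Tr H a l b) (ha : a ∈ X) (hb : b ∉ X) :
    ∃ l1 g l2 x y, l = l1 ++ g :: l2 ∧ Tr H a l1 x ∧ H.inc g = s(x, y) ∧ x ∈ X ∧ y ∉ X := by
  induction l generalizing a with
  | nil => 
    have : a = b := h
    exact absurd (this ▸ ha) hb
  | cons e l ih =>
    obtain ⟨c, h1, h2⟩ := h
    by_cases hc : c ∈ X
    · obtain ⟨l1, g, l2, x, y, h3, h4, h5⟩ := ih h2 hc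
      exact ⟨e :: l1, g, l2, x, y, by simp [h3], ⟨c, h1, h4⟩, h5⟩
    · exact ⟨[], e, l, a, c, by simp, rfl, h1, ha, hc⟩

lemma tr_walk {a b : V} (p : H.Walk a b) : Tr H a p.edges b := by
  induction p with
  | nil v => rfl
  | cons e he p ih => exact ⟨_, he, ih⟩

lemma support_of_edge {a b : V} (p : H.Walk a b) {e : E} (he : e ∈ p.edges) {x : V}
    (hx : x ∈ H.inc e) : x ∈ p.support := by
  induction p with
  | nil v => simp [Walk.edges] at he
  | @cons u v w f hf p ih =>
    simp only [Walk.edges, List.mem_cons] at he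
    simp only [Walk.support, List.mem_cons]
    rcases he with rfl | he
    · rw [hf] at hx
      simp only [Sym2.mem_iff] at hx
      rcases hx with rfl | rfl
      · exact Or.inl rfl
      · right
        cases p <;> simp [Walk.support]
    · exact Or.inr (ih he)

lemma edge_of_support {a b : V} (p : H.Walk a b) {x : V} (hx : x ∈ p.support) :
    x = a ∨ ∃ e ∈ p.edges, x ∈ H.inc e := by
  induction p with
  | nil v => left; simpa [Walk.support] using hx
  | @cons u v w f hf p ih =>
    simp only [Walk.support, List.mem_cons] at hx
    rcases hx with rfl | hx
    · exact Or.inl rfl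
    · right
      rcases ih hx with rfl | ⟨e, he, h⟩
      · exact ⟨f, by simp [Walk.edges], by rw [hf]; simp⟩
      · exact ⟨e, by simp [Walk.edges, he], h⟩

lemma edges_nodup {a b : V} (p : H.Walk a b) (h : p.support.Nodup) : p.edges.Nodup := by
  induction p with
  | nil v => simp [Walk.edges]
  | @cons u v w f hf p ih =>
    simp only [Walk.support, List.nodup_cons] at h
    simp only [Walk.edges, List.nodup_cons]
    refine ⟨fun hmem => h.1 (support_of_edge p hmem (by rw [hf]; simp)), ih h.2⟩

lemma walk_drop {a b : V} (p : H.Walk a b) {x : V} (hx : x ∈ p.support) (h : p.support.Nodup) :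
    ∃ q : H.Walk x b, q.support.Nodup ∧ ∀ e ∈ q.edges, e ∈ p.edges := by
  induction p with
  | nil v => 
    have : x = v := by simpa [Walk.support] using hx
    subst this
    exact ⟨.nil x, h, by simp⟩
  | @cons u v w f hf p ih =>
    simp only [Walk.support, List.mem_cons] at hx
    by_cases hxu : x = u
    · subst hxu
      exact ⟨.cons f hf p, h, fun _ h => h⟩
    · have h' := h
      simp only [Walk.support, List.nodup_cons] at h'
      obtain ⟨q, h1, h2⟩ := ih (hx.resolve_left hxu) h'.2
      exact ⟨q, h1, fun e he => by simp [Walk.edges, h2 e he]⟩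

lemma tr_path {a b : V} {l : List E} (h : Tr H a l b) :
    ∃ p : H.Walk a b, p.support.Nodup ∧ ∀ e ∈ p.edges, e ∈ l := by
  induction l generalizing a with
  | nil => 
    have : a = b := h
    subst this
    exact ⟨.nil a, by simp [Walk.support], by simp [Walk.edges]⟩
  | cons e l ih =>
    obtain ⟨c, h1, h2⟩ := h
    obtain ⟨p, h3, h4⟩ := ih h2
    by_cases ha : a ∈ p.support
    · obtain ⟨q, h5, h6⟩ := walk_drop p ha h3
      exact ⟨q, h5, fun f hf => by simp [h4 f (h6 f hf)]⟩
    · refine ⟨.cons e h1 p, by simp [Walk.support, ha, h3], ?_⟩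
      intro f hf
      simp only [Walk.edges, List.mem_cons] at hf ⊢
      exact hf.imp id (h4 f)

/-- `Good H s a L w`: `L` is the edge list of a walk from `s` to `w` starting with the edge `a`
and not returning to `s`. -/
def Good (H : Multigraph V E) (s : V) (a : E) (L : List E) (w : V) : Prop :=
  ∃ l, L = a :: l ∧ (∀ x ∈ l, x ∉ H.inci s) ∧ Tr H s L w

lemma good_path {s w : V} {a : E} {L : List E} (h : Good H s a L w) :
    ∃ p : H.Walk s w, p.support.Nodup ∧ (∀ e ∈ p.edges, e ∈ L) ∧ Good H s a p.edges w := by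
  obtain ⟨l, rfl, h2, c, h3, h4⟩ := h
  obtain ⟨p, h5, h6⟩ := tr_path h4
  have hs : s ∉ p.support := by
    intro hs
    rcases edge_of_support p hs with h | ⟨e, he, h⟩
    · exact inc_ne h3 h
    · exact h2 e (h6 e he) h
  refine ⟨.cons a h3 p, by simp [Walk.support, hs, h5], ?_, ?_⟩
  · intro f hf
    simp only [Walk.edges, List.mem_cons] at hf ⊢
    exact hf.imp id (h6 f)
  · exact ⟨p.edges, rfl, fun x hx => h2 x (h6 x hx), tr_walk (Walk.cons a h3 p)⟩

lemma good_end_ne {s w : V} {a : E} {L : List E} (h : Good H s a L w) : w ≠ s := by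
  obtain ⟨l, rfl, h2, c, h3, h4⟩ := h
  rintro rfl
  rcases List.eq_nil_or_concat l with rfl | ⟨l', f, rfl⟩
  · have : c = w := h4
    exact inc_ne h3 this.symm
  · rw [List.concat_eq_append, tr_split] at h4
    obtain ⟨x, y, -, h5, h6⟩ := h4
    have : y = w := h6
    exact h2 f (by simp) (by show w ∈ H.inc f; rw [h5, this]; simp)

lemma good_extend {s w y : V} {a g : E} {L : List E} (h : Good H s a L w) (hg : H.inc g = s(w, y))
    (hy : y ≠ s) : Good H s a (L ++ [g]) y := by
  have hw := good_end_ne h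
  obtain ⟨l, rfl, h2, h3⟩ := h
  refine ⟨l ++ [g], by simp, ?_, tr_split.2 ⟨w, y, h3, hg, rfl⟩⟩
  intro x hx
  simp only [List.mem_append, List.mem_singleton] at hx
  rcases hx with hx | rfl
  · exact h2 x hx
  · intro hs
    have : s ∈ H.inc x := hs
    rw [hg] at this
    simp only [Sym2.mem_iff] at this
    rcases this with h | h
    · exact hw h.symm
    · exact hy h.symm

lemma stpath_good {s t : V} (hst : s ≠ t) (p : H.STPath s t) :
    ∃ a, a ∈ H.inci s ∧ Good H s a p.walk.edges t := by
  obtain ⟨p, hp⟩ := p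
  cases p with
  | nil => exact absurd rfl hst
  | @cons _ v _ f hf p =>
    refine ⟨f, by show s ∈ H.inc f; rw [hf]; simp, p.edges, rfl, ?_, tr_walk (Walk.cons f hf p)⟩
    intro x hx hs
    simp only [Walk.support, List.nodup_cons] at hp
    exact hp.1 (support_of_edge p hx hs)

lemma good_mem {s w : V} {a b : E} {L : List E} (h : Good H s a L w) (hb : b ∈ L)
    (hbs : b ∈ H.inci s) : a = b := by
  obtain ⟨l, rfl, h2, h3⟩ := h
  rcases List.mem_cons.1 hb with h | h
  · exact h.symm
  · exact absurd hbs (h2 b h)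

lemma good_head {s w : V} {a : E} {L : List E} (h : Good H s a L w) : a ∈ L := by
  obtain ⟨l, rfl, h2, h3⟩ := h
  simp

/-- Truncation. -/
lemma good_take {s w x : V} {a g : E} {l1 l2 : List E} (h : Good H s a (l1 ++ g :: l2) w)
    (hg : g ∉ H.inci s) (hx : Tr H s l1 x) : Good H s a l1 x := by
  obtain ⟨l, h1, h2, h3⟩ := h
  cases l1 with
  | nil => 
    simp only [List.nil_append, List.cons.injEq] at h1
    obtain ⟨c, h4, -⟩ := h3
    exact absurd (show s ∈ H.inc g by rw [h4]; simp) hg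
  | cons b l1 =>
    simp only [List.cons_append, List.cons.injEq] at h1
    refine ⟨l1, by rw [h1.1], fun x hx => h2 x (by rw [← h1.2]; simp [hx]), hx⟩

/-- Concatenation. -/
lemma good_append {s w x : V} {a : E} {l m : List E} (h : Good H s a l x)
    (hm : ∀ z ∈ m, z ∉ H.inci s) (hx : Tr H x m w) : Good H s a (l ++ m) w := by
  obtain ⟨l, rfl, h2, h3⟩ := h
  refine ⟨l ++ m, by simp, ?_, tr_append.2 ⟨x, h3, hx⟩⟩
  intro z hz
  rcases List.mem_append.1 hz with h | h
  · exact h2 z h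
  · exact hm z h

lemma good_drop {s w : V} {a g : E} {l1 l2 : List E} (h : Good H s a (l1 ++ g :: l2) w) :
    ∀ z ∈ l2, z ∉ H.inci s := by
  obtain ⟨l, h1, h2, h3⟩ := h
  intro z hz
  apply h2
  cases l1 with
  | nil =>
    simp only [List.nil_append, List.cons.injEq] at h1
    rw [← h1.2]; exact hz
  | cons b l1 =>
    simp only [List.cons_append, List.cons.injEq] at h1
    rw [← h1.2]; simp [hz]

/-- Splicing two walks at a common edge `h`. `g` tracks directions of use. -/
lemma splice {s w t x : V} {a b g h : E} {l1 l2 m1 m2 : List E}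
    (hL : Good H s a (l1 ++ h :: l2) w) (hQ : Good H s b (m1 ++ h :: m2) t)
    (hgL : g ∉ l1 ++ h :: l2) (hnd : (l1 ++ h :: m2).Nodup)
    (hgQ : ∀ n1 n2, m1 ++ h :: m2 = n1 ++ g :: n2 → ¬ Tr H s n1 x) :
    ∃ R, (∀ z ∈ R, z ∈ l1 ++ h :: m2) ∧ Good H s a R t ∧ R.Nodup ∧
      ∀ n1 n2, R = n1 ++ g :: n2 → ¬ Tr H s n1 x := by
  have hm2 := good_drop hQ
  have hLt := hL.choose_spec.2.2
  have hQt := hQ.choose_spec.2.2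
  rw [tr_split] at hLt hQt
  obtain ⟨x1, y1, hL1, hL2, hL3⟩ := hLt
  obtain ⟨x2, y2, hQ1, hQ2, hQ3⟩ := hQt
  by_cases hh : h ∈ H.inci s
  · -- `h` is the first edge of both
    have h1 : a = h := good_mem hL (by simp) hh
    have h2 : b = h := good_mem hQ (by simp) hh
    have hl1 : l1 = [] := by
      cases l1 with
      | nil => rfl
      | cons c l1 =>
        exfalso
        obtain ⟨l, h3, h4, -⟩ := hL
        simp only [List.cons_append, List.cons.injEq] at h3
        exact h4 h (by rw [← h3.2]; simp) hh
    have hm1 : m1 = [] := by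
      cases m1 with
      | nil => rfl
      | cons c m1 =>
        exfalso
        obtain ⟨l, h3, h4, -⟩ := hQ
        simp only [List.cons_append, List.cons.injEq] at h3
        exact h4 h (by rw [← h3.2]; simp) hh
    subst hl1 hm1 h1 h2
    exact ⟨_, fun z hz => hz, hQ, hnd, hgQ⟩
  · have hL1' : Good H s a l1 x1 := good_take hL hh hL1
    by_cases hx : x1 = x2
    · subst hx
      have hy : y1 = y2 := inc_right hL2 hQ2
      subst hy
      refine ⟨l1 ++ h :: m2, fun z hz => hz, good_append hL1' ?_ ⟨y1, hL2, hQ3⟩, hnd, ?_⟩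
      · intro z hz
        rcases List.mem_cons.1 hz with rfl | hz
        · exact hh
        · exact hm2 z hz
      · intro n1 n2 hn htr
        have hn' : (l1 ++ [h]) ++ m2 = n1 ++ g :: n2 := by simpa using hn
        rw [List.append_eq_append_iff] at hn'
        rcases hn' with ⟨d, e1, e2⟩ | ⟨d, e1, e2⟩
        · apply hgQ (m1 ++ h :: d) n2 (by rw [e2]; simp)
          rw [e1, tr_append] at htr
          obtain ⟨c, h3, h4⟩ := htr
          have h5 : c = y1 := tr_unique h3 (tr_split.2 ⟨x1, y1, hL1, hL2, rfl⟩)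
          rw [h5] at h4
          exact tr_split.2 ⟨x1, y1, hQ1, hQ2, h4⟩
        · cases d with
          | nil =>
            simp only [List.nil_append] at e2
            apply hgQ (m1 ++ [h]) n2 (by rw [← e2]; simp)
            simp only [List.append_nil] at e1
            rw [← e1] at htr
            have := tr_unique htr (tr_split.2 ⟨x1, y1, hL1, hL2, rfl⟩)
            rw [this]
            exact tr_split.2 ⟨x1, y1, hQ1, hQ2, rfl⟩
          | cons d0 d =>
            simp only [List.cons_append, List.cons.injEq] at e2
            have : g ∈ l1 ++ [h] := by rw [e1, e2.1]; simp
            exact hgL (by simp at this ⊢; tauto)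
    · have hxy : y2 = x1 := by
        rw [hL2, Sym2.eq_iff] at hQ2
        rcases hQ2 with h | h
        · exact absurd h.1 hx
        · exact h.1.symm
      subst hxy
      refine ⟨l1 ++ m2, ?_, good_append hL1' hm2 hQ3, ?_, ?_⟩
      · intro z hz
        simp at hz ⊢; tauto
      · exact hnd.sublist (by simp)
      · intro n1 n2 hn htr
        rw [List.append_eq_append_iff] at hn
        rcases hn with ⟨d, e1, e2⟩ | ⟨d, e1, e2⟩
        · apply hgQ (m1 ++ h :: d) n2 (by rw [e2]; simp)
          rw [e1, tr_append] at htr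
          obtain ⟨c, h3, h4⟩ := htr
          have h5 : c = y2 := tr_unique h3 hL1
          rw [h5] at h4
          exact tr_split.2 ⟨x2, y2, hQ1, hQ2, h4⟩
        · cases d with
          | nil =>
            simp only [List.nil_append] at e2
            apply hgQ (m1 ++ [h]) n2 (by rw [← e2]; simp)
            simp only [List.append_nil] at e1
            rw [← e1] at htr
            rw [tr_unique htr hL1]
            exact tr_split.2 ⟨x2, y2, hQ1, hQ2, rfl⟩
          | cons d0 d =>
            simp only [List.cons_append, List.cons.injEq] at e2
            exact hgL (by rw [e1, e2.1]; simp)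

/-- A family of walks, one for each edge at `s`, pairwise edge-disjoint and avoiding `e`;
all end in `t` except that the one of `a0` ends in `x`. -/
structure Wit (H : Multigraph V E) (s t : V) (e : E) (x : V) (a0 : H.inci s)
    (F : H.inci s → List E) : Prop where
  good : ∀ a, a ≠ a0 → Good H s a (F a) t
  good0 : Good H s a0 (F a0) x
  disj : ∀ a b z, z ∈ F a → z ∈ F b → a = b
  avoid : ∀ a, e ∉ F a

def inX (H : Multigraph V E) (s t : V) (e : E) (x : V) : Prop := ∃ a0 F, Wit H s t e x a0 F

variable {s t : V} {e : E}

lemma wit_nodup {x : V} {a0 : H.inci s} {F : H.inci s → List E} (h : Wit H s t e x a0 F) :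
    ∃ F', Wit H s t e x a0 F' ∧ ∀ a, (F' a).Nodup := by
  have : ∀ a, ∃ L : List E, (∀ z ∈ L, z ∈ F a) ∧ (a ≠ a0 → Good H s a L t) ∧
      (a = a0 → Good H s a L x) ∧ L.Nodup := by
    intro a
    by_cases ha : a = a0
    · subst ha
      obtain ⟨p, h1, h2, h3⟩ := good_path h.good0
      exact ⟨p.edges, h2, fun h => absurd rfl h, fun _ => h3, edges_nodup p h1⟩
    · obtain ⟨p, h1, h2, h3⟩ := good_path (h.good a ha)
      exact ⟨p.edges, h2, fun _ => h3, fun h => absurd h ha, edges_nodup p h1⟩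
  choose F' h1 h2 h3 h4 using this
  exact ⟨F', ⟨h2, h3 a0 rfl, fun a b z ha hb => h.disj a b z (h1 a z ha) (h1 b z hb),
    fun a ha => h.avoid a (h1 a e ha)⟩, h4⟩

lemma not_inci {g : E} {x y : V} (hg : H.inc g = s(x, y)) (hx : x ≠ s) (hy : y ≠ s) :
    g ∉ H.inci s := by
  intro h
  have : s ∈ H.inc g := h
  rw [hg, Sym2.mem_iff] at this
  rcases this with h | h
  · exact hx h.symm
  · exact hy h.symm

/-- Elementary step. -/
lemma step1 {x y : V} {a0 : H.inci s} {F : H.inci s → List E} {g : E}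
    (h : Wit H s t e x a0 F) (hnd : ∀ a, (F a).Nodup) (hg : H.inc g = s(x, y)) (hge : g ≠ e) (hy : y ≠ s)
    (hno : ∀ a, a ≠ a0 → ∀ n1 n2, F a = n1 ++ g :: n2 → ¬ Tr H s n1 x) : inX H s t e y := by
  classical
  have hx := good_end_ne h.good0
  have hgs := not_inci hg hx hy
  by_cases hu : ∃ a, g ∈ F a
  · obtain ⟨a, ha⟩ := hu
    obtain ⟨n1, n2, hn⟩ := List.append_of_mem ha
    by_cases haa : a = a0
    · subst haa
      have hG := h.good0
      rw [hn] at hG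
      have hT := hG.choose_spec.2.2
      obtain ⟨x', y', h1, h2, h3⟩ := tr_split.1 hT
      have hsub : ∀ L : List E, (∀ z ∈ L, z ∈ F a) → Good H s a L y → inX H s t e y := by
        intro L hL hGL
        refine ⟨a, Function.update F a L, ?_, ?_, ?_, ?_⟩
        · intro b hb
          rw [Function.update_of_ne hb]
          exact h.good b hb
        · simpa using hGL
        · have : ∀ b z, z ∈ Function.update F a L b → z ∈ F b := by
            intro b z hz
            by_cases hb : b = a
            · subst hb
              exact hL z (by simpa using hz)
            · rwa [Function.update_of_ne hb] at hz
          exact fun b c z hb hc => h.disj b c z (this b z hb) (this c z hc)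
        · intro b hb
          by_cases hba : b = a
          · subst hba
            exact h.avoid b (hL e (by simpa using hb))
          · rw [Function.update_of_ne hba] at hb
            exact h.avoid b hb
      by_cases hxx : x' = x
      · subst hxx
        apply hsub (n1 ++ [g])
        · intro z hz
          rw [hn]
          simp at hz ⊢; tauto
        · exact good_extend (good_take hG hgs h1) hg hy
      · have : x' = y := by
          rw [hg, Sym2.eq_iff] at h2
          rcases h2 with h | h
          · exact absurd h.1.symm hxx
          · exact h.2.symm
        subst this
        apply hsub n1
        · intro z hz
          rw [hn]
          simp [hz]
        · exact good_take hG hgs h1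
    · have hG := h.good a haa
      rw [hn] at hG
      have hT := hG.choose_spec.2.2
      obtain ⟨x', y', h1, h2, h3⟩ := tr_split.1 hT
      have hxx : x' ≠ x := by
        rintro rfl
        exact hno a haa n1 n2 hn h1
      have hxy : x' = y ∧ y' = x := by
        rw [hg, Sym2.eq_iff] at h2
        rcases h2 with h | h
        · exact absurd h.1.symm hxx
        · exact ⟨h.2.symm, h.1.symm⟩
      obtain ⟨rfl, rfl⟩ := hxy
      let F' := Function.update (Function.update F a n1) a0 (F a0 ++ n2)
      have hFa : F' a = n1 := by simp [F', Function.update_of_ne haa]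
      have hF0 : F' a0 = F a0 ++ n2 := by simp [F']
      have hFb : ∀ b, b ≠ a → b ≠ a0 → F' b = F b := by
        intro b h1 h2
        simp [F', Function.update_of_ne h1, Function.update_of_ne h2]
      have hsub : ∀ b z, z ∈ F' b → (z ∈ F b ∧ (b = a → z ∈ n1)) ∨ (b = a0 ∧ z ∈ n2) := by
        intro b z hz
        by_cases hb : b = a
        · subst hb
          rw [hFa] at hz
          exact Or.inl ⟨by rw [hn]; simp [hz], fun _ => hz⟩
        · by_cases hb0 : b = a0
          · subst hb0
            rw [hF0, List.mem_append] at hz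
            rcases hz with hz | hz
            · exact Or.inl ⟨hz, fun h => absurd h hb⟩
            · exact Or.inr ⟨rfl, hz⟩
          · rw [hFb b hb hb0] at hz
            exact Or.inl ⟨hz, fun h => absurd h hb⟩
      have hdis : ∀ z, z ∈ n1 → z ∈ n2 → False := by
        intro z h1 h2
        have := hnd a
        rw [hn, List.nodup_append] at this
        exact this.2.2 z h1 z (by simp [h2]) rfl
      have hn2 : ∀ z ∈ n2, z ∈ F a := fun z hz => by rw [hn]; simp [hz]
      refine ⟨a, F', ?_, ?_, ?_, ?_⟩
      · intro b hb
        by_cases hb0 : b = a0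
        · subst hb0
          rw [hF0]
          exact good_append h.good0 (good_drop hG) h3
        · rw [hFb b hb hb0]
          exact h.good b hb0
      · rw [hFa]
        exact good_take hG hgs h1
      · intro b c z hb hc
        rcases hsub b z hb with ⟨p1, p2⟩ | ⟨p1, p2⟩ <;>
          rcases hsub c z hc with ⟨q1, q2⟩ | ⟨q1, q2⟩
        · exact h.disj b c z p1 q1
        · exact (hdis z (p2 (h.disj b a z p1 (hn2 z q2))) q2).elim
        · exact (hdis z (q2 (h.disj c a z q1 (hn2 z p2))) p2).elim
        · rw [p1, q1]
      · intro b hb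
        rcases hsub b e hb with ⟨p1, p2⟩ | ⟨p1, p2⟩
        · exact h.avoid b p1
        · exact h.avoid a (hn2 e p2)
  · refine ⟨a0, Function.update F a0 (F a0 ++ [g]), ?_, ?_, ?_, ?_⟩
    · intro b hb
      rw [Function.update_of_ne hb]
      exact h.good b hb
    · simpa using good_extend h.good0 hg hy
    · have : ∀ b z, z ∈ Function.update F a0 (F a0 ++ [g]) b → z ∈ F b ∨ (b = a0 ∧ z = g) := by
        intro b z hz
        by_cases hb : b = a0
        · subst hb
          simpa using hz
        · rw [Function.update_of_ne hb] at hz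
          exact Or.inl hz
      intro b c z hb hc
      rcases this b z hb with h1 | ⟨h1, h1'⟩ <;> rcases this c z hc with h2 | ⟨h2, h2'⟩
      · exact h.disj b c z h1 h2
      · exact absurd ⟨b, h2' ▸ h1⟩ hu
      · exact absurd ⟨c, h1' ▸ h2⟩ hu
      · rw [h1, h2]
    · intro b hb
      by_cases hba : b = a0
      · subst hba
        simp only [Function.update_self, List.mem_append, List.mem_singleton] at hb
        rcases hb with hb | hb
        · exact h.avoid b hb
        · exact hge hb.symm
      · rw [Function.update_of_ne hba] at hb
        exact h.avoid b hb

end TightCut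

namespace TightCut

open Multigraph

variable {V : Type u} {E : Type v} {H : Multigraph V E} {s t : V} {e : E}

/-- The main step, using the exchange lemma. -/
lemma step2 {x y : V} {g : E} (h : inX H s t e x) (hg : H.inc g = s(x, y)) (hge : g ≠ e)
    (hy : y ≠ s) (b : H.inci s) (Q : H.inci s → List E)
    (hQ : ∀ a, a ≠ b → Good H s a (Q a) t) (hQn : ∀ a, a ≠ b → (Q a).Nodup)
    (hQd : ∀ a c z, a ≠ b → c ≠ b → z ∈ Q a → z ∈ Q c → a = c)
    (hQe : ∀ a, a ≠ b → e ∉ Q a)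
    (hno : ∀ a, a ≠ b → ∀ n1 n2, Q a = n1 ++ g :: n2 → ¬ Tr H s n1 x) :
    inX H s t e y ∨ inX H s t e t := by
  classical
  obtain ⟨a0, F0, hF0⟩ := h
  obtain ⟨F, hF, hnd⟩ := wit_nodup hF0
  have hgs := not_inci hg (good_end_ne hF.good0) hy
  by_cases hu : ∀ a, a ≠ a0 → ∀ n1 n2, F a = n1 ++ g :: n2 → ¬ Tr H s n1 x
  · exact Or.inl (step1 hF hnd hg hge hy hu)
  push Not at hu
  obtain ⟨a, haa, n1, n2, hn, htr⟩ := hu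
  let L := Function.update F a n1
  have hLa : L a = n1 := by simp [L]
  have hLb : ∀ c, c ≠ a → L c = F c := fun c hc => by simp [L, hc]
  have hsub : ∀ c z, z ∈ L c → z ∈ F c := by
    intro c z hz
    by_cases hc : c = a
    · subst hc
      rw [hLa] at hz
      rw [hn]; simp [hz]
    · rwa [hLb c hc] at hz
  have hGn : Good H s a n1 x := by
    have := hF.good a haa
    rw [hn] at this
    exact good_take this hgs htr
  have hLgood : ∀ c : H.inci s, ∃ w, Good H s c (L c) w ∧ (w = x ∨ w = t) := by
    intro c
    by_cases hc : c = a
    · subst hc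
      rw [hLa]
      exact ⟨x, hGn, Or.inl rfl⟩
    · rw [hLb c hc]
      by_cases hc0 : c = a0
      · subst hc0
        exact ⟨x, hF.good0, Or.inl rfl⟩
      · exact ⟨t, hF.good c hc0, Or.inr rfl⟩
  have hgL : ∀ c, g ∉ L c := by
    intro c hc
    by_cases hca : c = a
    · subst hca
      have := hnd c
      rw [hn, List.nodup_append] at this
      rw [hLa] at hc
      exact this.2.2 g hc g (by simp) rfl
    · exact hca (hF.disj c a g (hsub c g hc) (by rw [hn]; simp))
  have hLn : ∀ c, (L c).Nodup := by
    intro c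
    by_cases hca : c = a
    · subst hca
      have := hnd c
      rw [hn] at this
      rw [hLa]
      exact this.of_append_left
    · rw [hLb c hca]; exact hnd c
  obtain ⟨r, B, hB, hrd, hrn, hrB, hrs⟩ := exchange (fun a : H.inci s => (a : E)) b L Q
    (fun c => by
      obtain ⟨w, ⟨l, hl, -⟩, -⟩ := hLgood c
      exact ⟨l, hl⟩)
    (fun c hc => by
      obtain ⟨l, h1, h2, -⟩ := hQ c hc
      exact ⟨l, h1, fun j hj => h2 _ hj j.2⟩)
    hLn hQn (fun c d z h1 h2 => hF.disj c d z (hsub c z h1) (hsub d z h2)) hQd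
  have hR : ∀ c : H.inci s, ∃ R : List E, (∀ z ∈ R, z ∈ r c) ∧ R.Nodup ∧ e ∉ R ∧
      (c ∈ B → ∃ w, Good H s c R w ∧ (w = x ∨ w = t)) ∧ (c ∉ B → Good H s c R t) ∧
      ∀ n1 n2, R = n1 ++ g :: n2 → ¬ Tr H s n1 x := by
    intro c
    by_cases hc : c ∈ B
    · refine ⟨L c, fun z hz => by rw [hrB c hc]; exact hz, hLn c,
        fun h => hF.avoid c (hsub c e h), fun _ => hLgood c, fun h => absurd hc h, ?_⟩
      intro n1 n2 h
      exact absurd (by rw [h]; simp) (hgL c)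
    · obtain ⟨j, hj, l1, f, l2, m1, m2, h1, h2, h3⟩ := hrs c hc
      obtain ⟨w, hw, -⟩ := hLgood c
      have hw' := hw
      have hQj := hQ j hj
      have hgc := hgL c
      have hrc := hrn c
      rw [h1] at hw' hgc
      rw [h2] at hQj
      rw [h3] at hrc
      obtain ⟨R, k1, k2, k3, k4⟩ := splice hw' hQj hgc hrc
        (fun n1 n2 hh => hno j hj n1 n2 (h2.trans hh))
      refine ⟨R, fun z hz => by rw [h3]; exact k1 z hz, k3, ?_, fun h => absurd h hc,
        fun _ => k2, k4⟩
      intro he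
      have := k1 e he
      have hcase : e ∈ l1 ++ f :: l2 ∨ e ∈ m1 ++ f :: m2 := by
        simp at this ⊢; tauto
      rcases hcase with hh | hh
      · exact hF.avoid c (hsub c e (by rw [h1]; exact hh))
      · exact hQe j hj (by rw [h2]; exact hh)
  choose R hR1 hR2 hR3 hR4 hR5 hR6 using hR
  by_cases hall : ∀ c : H.inci s, Good H s c (R c) t
  · exact Or.inr ⟨a0, R, fun c _ => hall c, hall a0,
      fun c d z h1 h2 => hrd c d z (hR1 c z h1) (hR1 d z h2), hR3⟩
  · left
    push Not at hall
    obtain ⟨c, hc⟩ := hall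
    have hcB : c ∈ B := by
      by_contra hcon
      exact hc (hR5 c hcon)
    have hcx : Good H s c (R c) x := by
      obtain ⟨w, hw, rfl | rfl⟩ := hR4 c hcB
      · exact hw
      · exact absurd hw hc
    refine step1 (a0 := c) (F := R) ⟨?_, hcx, ?_, hR3⟩ hR2 hg hge hy (fun d _ => hR6 d)
    · intro d hd
      exact hR5 d (fun hdB => hd (hB hdB hcB))
    · exact fun c d z h1 h2 => hrd c d z (hR1 c z h1) (hR1 d z h2)

/-- The family of edge lists of a system covering `δ(s)`. -/
lemma system_family (hst : s ≠ t) (Q : Set (H.STPath s t)) (hQ : H.STPathDisjoint Q)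
    (hc : ∀ f ∈ H.inci s, ∃ q ∈ Q, f ∈ q.walk.edges) :
    ∃ p : H.inci s → H.STPath s t, (∀ a, p a ∈ Q) ∧ (∀ a : H.inci s, Good H s a (p a).walk.edges t) ∧
      (∀ a c z, z ∈ (p a).walk.edges → z ∈ (p c).walk.edges → a = c) ∧
      ∀ q ∈ Q, ∃ a, p a = q := by
  have : ∀ a : H.inci s, ∃ q ∈ Q, (a : E) ∈ q.walk.edges := fun a => hc a a.2
  choose p hp1 hp2 using this
  have hg : ∀ a : H.inci s, Good H s a (p a).walk.edges t := by
    intro a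
    obtain ⟨b, hb, hG⟩ := stpath_good hst (p a)
    have := good_mem hG (hp2 a) a.2
    rwa [this] at hG
  refine ⟨p, hp1, hg, ?_, ?_⟩
  · intro a c z h1 h2
    have hpe : p a = p c := by
      by_contra hne
      exact hQ _ (hp1 a) _ (hp1 c) hne z h1 h2
    have h3 := hp2 c
    rw [← hpe] at h3
    exact Subtype.ext (good_mem (hg a) h3 c.2)
  · intro q hq
    obtain ⟨b, hb, hG⟩ := stpath_good hst q
    refine ⟨⟨b, hb⟩, ?_⟩
    by_contra hne
    exact hQ _ (hp1 ⟨b, hb⟩) _ hq hne b (hp2 _) (good_head hG)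

lemma stpath_edges_nodup (p : H.STPath s t) : p.walk.edges.Nodup :=
  edges_nodup _ p.support_nodup

/-- Truncating a system before `e`. -/
lemma inX_of_split (he : e ∉ H.inci s)
    (p : H.inci s → H.STPath s t) (hg : ∀ a : H.inci s, Good H s a (p a).walk.edges t)
    (hd : ∀ a c z, z ∈ (p a).walk.edges → z ∈ (p c).walk.edges → a = c)
    (b : H.inci s) {l1 l2 : List E} (hb : (p b).walk.edges = l1 ++ e :: l2) {x : V}
    (hx : Tr H s l1 x) : inX H s t e x := by
  classical
  let F : H.inci s → List E := Function.update (fun a => (p a).walk.edges) b l1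
  have hFb : F b = l1 := by simp [F]
  have hF : ∀ a, a ≠ b → F a = (p a).walk.edges := fun a ha => by simp [F, ha]
  have hsub : ∀ a z, z ∈ F a → z ∈ (p a).walk.edges := by
    intro a z hz
    by_cases ha : a = b
    · subst ha
      rw [hFb] at hz
      rw [hb]; simp [hz]
    · rwa [hF a ha] at hz
  refine ⟨b, F, ?_, ?_, fun a c z h1 h2 => hd a c z (hsub a z h1) (hsub c z h2), ?_⟩
  · intro a ha
    rw [hF a ha]; exact hg a
  · rw [hFb]
    have := hg b
    rw [hb] at this
    exact good_take this he hx
  · intro a hea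
    by_cases ha : a = b
    · subst ha
      rw [hFb] at hea
      have := stpath_edges_nodup (p a)
      rw [hb, List.nodup_append] at this
      exact this.2.2 e hea e (by simp) rfl
    · exact ha (hd a b e (hsub a e hea) (by rw [hb]; simp))

lemma not_inX_t
    (huse : ∀ Q : Set (H.STPath s t), H.STPathDisjoint Q →
      (∀ f ∈ H.inci s, ∃ q ∈ Q, f ∈ q.walk.edges) →
      ∃ q ∈ Q, e ∈ q.walk.edges) : ¬ inX H s t e t := by
  rintro ⟨a0, F, hF⟩
  have hall : ∀ a : H.inci s, Good H s a (F a) t := by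
    intro a
    by_cases ha : a = a0
    · subst ha; exact hF.good0
    · exact hF.good a ha
  have : ∀ a : H.inci s, ∃ p : H.STPath s t, (∀ z ∈ p.walk.edges, z ∈ F a) ∧
      (a : E) ∈ p.walk.edges := by
    intro a
    obtain ⟨p, h1, h2, h3⟩ := good_path (hall a)
    exact ⟨⟨p, h1⟩, h2, good_head h3⟩
  choose p h1 h2 using this
  obtain ⟨q, ⟨a, rfl⟩, hq⟩ := huse (Set.range p) (by
    rintro _ ⟨a, rfl⟩ _ ⟨b, rfl⟩ hne z hz hz'
    exact hne (by rw [hF.disj a b z (h1 a z hz) (h1 b z hz')]))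
    (fun f hf => ⟨p ⟨f, hf⟩, ⟨_, rfl⟩, h2 ⟨f, hf⟩⟩)
  exact hF.avoid a (h1 a e hq)

lemma split_unique {α : Type*} {m1 m2 n1 n2 : List α} {x : α}
    (h : m1 ++ x :: m2 = n1 ++ x :: n2) (hn : (m1 ++ x :: m2).Nodup) : m1 = n1 := by
  have hn' := hn
  rw [h] at hn'
  rw [List.append_eq_append_iff] at h
  rcases h with ⟨d, e1, e2⟩ | ⟨d, e1, e2⟩
  · cases d with
    | nil => simpa using e1.symm
    | cons w d =>
      simp only [List.cons_append, List.cons.injEq] at e2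
      rw [e2.2] at hn
      simp [List.nodup_append] at hn
  · cases d with
    | nil => simpa using e1
    | cons w d =>
      simp only [List.cons_append, List.cons.injEq] at e2
      rw [e2.2] at hn'
      simp [List.nodup_append] at hn'

/-- A walk crossing a cut only outwards crosses it at most once. -/
lemma cross_unique {X : Set V} {a b : V} {l : List E} (hl : Tr H a l b) (hn : l.Nodup)
    (hout : ∀ g ∈ l, g ∈ H.cut X → ∃ l1 l2 x, l = l1 ++ g :: l2 ∧ Tr H a l1 x ∧ x ∈ X)
    {f g : E} (hf : f ∈ l) (hg : g ∈ l) (hfc : f ∈ H.cut X) (hgc : g ∈ H.cut X) : f = g := by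
  -- positions: an edge never occurs after another
  have key : ∀ f ∈ H.cut X, ∀ g ∈ H.cut X, ∀ l1 l2, l = l1 ++ f :: l2 → g ∈ l2 → False := by
    intro f hfc g hgc l1 l2 h1 h2
    obtain ⟨k1, k2, x, h3, h4, h5⟩ := hout f (by rw [h1]; simp) hfc
    have e1 : k1 = l1 := split_unique (h3.symm.trans h1) (h3 ▸ hn)
    subst e1
    have hl' := hl
    rw [h1, tr_split] at hl'
    obtain ⟨x', y, t1, t2, t3⟩ := hl'
    have := tr_unique t1 h4
    subst this
    have hy : y ∉ X := by
      obtain ⟨c, d, i1, i2, i3⟩ := hfc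
      rw [t2, Sym2.eq_iff] at i1
      rcases i1 with ⟨rfl, rfl⟩ | ⟨rfl, rfl⟩
      · exact i3
      · exact absurd h5 i3
    obtain ⟨n1, n2, h6⟩ := List.append_of_mem h2
    obtain ⟨k1', k2', z, h7, h8, h9⟩ := hout g (by rw [h1]; simp [h2]) hgc
    have e2 : k1' = k1 ++ f :: n1 := by
      refine split_unique (m2 := k2') (n2 := n2) (x := g) ?_ (h7 ▸ hn)
      rw [← h7, h1, h6]; simp
    rw [e2, tr_split] at h8
    obtain ⟨x'', y', s1, s2, s3⟩ := h8
    have := tr_unique s1 h4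
    subst this
    have := inc_right s2 t2
    subst this
    -- from outside back into `X`
    obtain ⟨d1, w, d2, p, q, j1, j2, j3, j4, j5⟩ :=
      tr_cross (X := Xᶜ) s3 hy (fun h => h h9)
    have hwc : w ∈ H.cut X := ⟨q, p, by rw [j3, Sym2.eq_swap], by simpa using j5, j4⟩
    obtain ⟨c1, c2, z', r1, r2, r3⟩ := hout w (by rw [h1, h6, j1]; simp) hwc
    have e3 : c1 = k1 ++ f :: d1 := by
      refine split_unique (m2 := c2) (n2 := d2 ++ g :: n2) (x := w) ?_ (r1 ▸ hn)
      rw [← r1, h1, h6, j1]; simp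
    have : Tr H a c1 p := by
      rw [e3]
      exact tr_split.2 ⟨_, _, s1, s2, j2⟩
    have := tr_unique this r2
    subst this
    exact j4 r3
  obtain ⟨l1, l2, h1⟩ := List.append_of_mem hf
  have hg' := hg
  rw [h1] at hg'
  simp only [List.mem_append, List.mem_cons] at hg'
  rcases hg' with h | h | h
  · exfalso
    obtain ⟨n1, n2, h2⟩ := List.append_of_mem h
    exact key g hgc f hfc n1 (n2 ++ f :: l2) (by rw [h1, h2]; simp) (by simp)
  · exact h.symm
  · exact (key f hfc g hgc l1 l2 h1 h).elim

end TightCut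

/-- If some system of pairwise edge-disjoint `st`-paths covers `δ(s)` and the
edge `e ∉ δ(s)` is used by every such system, then there is an `s`-tight
Erdős–Menger `st`-cut `C` containing `e`: every system of pairwise
edge-disjoint `st`-paths covering `δ(s)` is orthogonal to `C`. -/
theorem tight_cut {V : Type u} {E : Type v} (H : Multigraph V E) (s t : V)
    (hst : s ≠ t)
    (hP : ∃ P : Set (H.STPath s t), H.STPathDisjoint P ∧
      ∀ f ∈ H.inci s, ∃ p ∈ P, f ∈ p.walk.edges)
    (e : E) (he : e ∉ H.inci s)
    (huse : ∀ Q : Set (H.STPath s t), H.STPathDisjoint Q →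
      (∀ f ∈ H.inci s, ∃ q ∈ Q, f ∈ q.walk.edges) →
      ∃ q ∈ Q, e ∈ q.walk.edges) :
    ∃ C : Set E, e ∈ C ∧ H.IsEMCut s t C ∧
      ∀ Q : Set (H.STPath s t), H.STPathDisjoint Q →
        (∀ f ∈ H.inci s, ∃ q ∈ Q, f ∈ q.walk.edges) →
        (∀ q ∈ Q, ∃! f, f ∈ C ∧ f ∈ q.walk.edges) ∧
        (∀ f ∈ C, ∃ q ∈ Q, f ∈ q.walk.edges) := by
  classical
  have hnt := TightCut.not_inX_t huse
  let X : Set V := {x | x = s ∨ TightCut.inX H s t e x}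
  have hsX : s ∈ X := Or.inl rfl
  have htX : t ∉ X := by
    rintro (h | h)
    · exact hst h.symm
    · exact hnt h
  -- the edges of the cut are used outwards by every system
  have key : ∀ Q : Set (H.STPath s t), H.STPathDisjoint Q →
      (∀ f ∈ H.inci s, ∃ q ∈ Q, f ∈ q.walk.edges) → ∀ g x y, H.inc g = s(x, y) → x ∈ X →
      y ∉ X → ∃ q ∈ Q, ∃ l1 l2, q.walk.edges = l1 ++ g :: l2 ∧ TightCut.Tr H s l1 x := by
    intro Q hQ hQc g x y hg hx hy
    obtain ⟨p, hp1, hp2, hp3, hp4⟩ := TightCut.system_family hst Q hQ hQc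
    have hys : y ≠ s := fun h => hy (Or.inl h)
    rcases hx with rfl | hx
    · have hgA : g ∈ H.inci x := by
        show x ∈ H.inc g
        rw [hg]; simp
      obtain ⟨l, h1, -⟩ := hp2 ⟨g, hgA⟩
      exact ⟨_, hp1 ⟨g, hgA⟩, [], l, by simpa using h1, rfl⟩
    · obtain ⟨q, hq, heq⟩ := huse Q hQ hQc
      obtain ⟨b, rfl⟩ := hp4 q hq
      by_cases hge : g = e
      · subst hge
        obtain ⟨l1, l2, h1⟩ := List.append_of_mem heq
        have htr := TightCut.tr_walk (p b).walk
        rw [h1, TightCut.tr_split] at htr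
        obtain ⟨x', y', t1, t2, t3⟩ := htr
        rw [hg, Sym2.eq_iff] at t2
        rcases t2 with ⟨rfl, rfl⟩ | ⟨rfl, rfl⟩
        · exact ⟨_, hq, l1, l2, h1, t1⟩
        · exact absurd (Or.inr (TightCut.inX_of_split he p hp2 hp3 b h1 t1)) hy
      · by_contra hcon
        have := TightCut.step2 hx hg hge hys b (fun a => (p a).walk.edges)
          (fun a _ => hp2 a) (fun a _ => TightCut.stpath_edges_nodup (p a))
          (fun a c z _ _ h1 h2 => hp3 a c z h1 h2)
          (fun a ha hea => ha (hp3 a b e hea heq))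
          (fun a _ n1 n2 h1 h2 => hcon ⟨p a, hp1 a, n1, n2, h1, h2⟩)
        rcases this with h | h
        · exact hy (Or.inr h)
        · exact hnt h
  have orth : ∀ Q : Set (H.STPath s t), H.STPathDisjoint Q →
        (∀ f ∈ H.inci s, ∃ q ∈ Q, f ∈ q.walk.edges) →
        (∀ q ∈ Q, ∃! f, f ∈ H.cut X ∧ f ∈ q.walk.edges) ∧
        (∀ f ∈ H.cut X, ∃ q ∈ Q, f ∈ q.walk.edges) := by
    intro Q hQ hQc
    refine ⟨?_, ?_⟩
    · intro q hq
      have htr := TightCut.tr_walk q.walk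
      obtain ⟨l1, g, l2, x, y, h1, h2, h3, h4, h5⟩ := TightCut.tr_cross htr hsX htX
      refine ⟨g, ⟨⟨x, y, h3, h4, h5⟩, by rw [h1]; simp⟩, ?_⟩
      rintro f ⟨hfc, hfq⟩
      refine TightCut.cross_unique htr (TightCut.stpath_edges_nodup q) ?_ hfq
        (by rw [h1]; simp) hfc ⟨x, y, h3, h4, h5⟩
      intro w hw hwc
      obtain ⟨x', y', k1, k2, k3⟩ := hwc
      obtain ⟨q', hq', n1, n2, k4, k5⟩ := key Q hQ hQc w x' y' k1 k2 k3
      have : q' = q := by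
        by_contra hne
        exact hQ q' hq' q hq hne w (by rw [k4]; simp) hw
      subst this
      exact ⟨n1, n2, x', k4, k5, k2⟩
    · rintro f ⟨x, y, h1, h2, h3⟩
      obtain ⟨q, hq, l1, l2, h4, -⟩ := key Q hQ hQc f x y h1 h2 h3
      exact ⟨q, hq, by rw [h4]; simp⟩
  obtain ⟨P, hPd, hPc⟩ := hP
  refine ⟨H.cut X, ?_, ⟨⟨X, hsX, htX, rfl⟩, P, hPd, orth P hPd hPc⟩, orth⟩
  -- `e` belongs to the cut
  obtain ⟨p, hp1, hp2, hp3, hp4⟩ := TightCut.system_family hst P hPd hPc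
  obtain ⟨q, hq, heq⟩ := huse P hPd hPc
  obtain ⟨b, rfl⟩ := hp4 q hq
  obtain ⟨l1, l2, h1⟩ := List.append_of_mem heq
  have htr := TightCut.tr_walk (p b).walk
  have hnd := TightCut.stpath_edges_nodup (p b)
  have hGb := hp2 b
  rw [h1] at htr hnd hGb
  obtain ⟨u, w, t1, t2, t3⟩ := TightCut.tr_split.1 htr
  refine ⟨u, w, t2, Or.inr (TightCut.inX_of_split he p hp2 hp3 b h1 t1), ?_⟩
  have hl2 := TightCut.good_drop hGb
  have walkOn : ∀ (m : List E) (y : V), (∀ z ∈ m, z ∈ l2) → TightCut.Tr H y m t →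
      TightCut.inX H s t e y → TightCut.inX H s t e t := by
    intro m
    induction m with
    | nil =>
      intro y _ h2 h3
      have : y = t := h2
      rwa [this] at h3
    | cons g m ih =>
      rintro y hm ⟨c, k1, k2⟩ h3
      have hgl : g ∈ l2 := hm g (by simp)
      have hgb : g ∈ (p b).walk.edges := by rw [h1]; simp [hgl]
      have hge : g ≠ e := by
        rintro rfl
        simp [List.nodup_append, hgl] at hnd
      have hcs : c ≠ s := by
        rintro rfl
        exact hl2 g hgl (by show c ∈ H.inc g; rw [k1]; simp)
      rcases TightCut.step2 h3 k1 hge hcs b (fun a => (p a).walk.edges)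
          (fun a _ => hp2 a) (fun a _ => TightCut.stpath_edges_nodup (p a))
          (fun a c z _ _ h1 h2 => hp3 a c z h1 h2)
          (fun a ha hea => ha (hp3 a b e hea heq))
          (fun a ha n1 n2 h1 _ => ha (hp3 a b g
            (by show g ∈ (p a).walk.edges; rw [h1]; simp) hgb)) with h | h
      · exact ih c (fun z hz => hm z (by simp [hz])) k2 h
      · exact h
  rintro (h | h)
  · apply he
    show s ∈ H.inc e
    rw [t2, h]; simp
  · exact hnt (walkOn l2 w (fun _ h => h) t3 h)
end
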